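/- Let n ≥ 1 and let Z ⊆ ℂ^n be a nonempty irreducible Zariski closed subset defined over ℚ̄ such that exp(Z) ⊆ (ℂ^*)^n is also an irreducible Zariski closed subset defined over ℚ̄. Then exp(Z) is a torsion translate of a subtorus of (ℂ^*)^n. -/

import Mathlib

/-!
Let `V` be the smallest rational subspace of `ℂ^n` containing all differences of points of `Z`.
Exponentials of polynomials which pairwise differ by nonconstant functions on `Z` are linearly
independent over the coordinate ring of `Z`; this follows from the fact that, in a function field
over `ℂ`, no `h ≠ 0` satisfies `D h = h * D φ` for all derivations `D` when `φ` is not constant.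
Hence a polynomial vanishing on `exp(Z)` vanishes on `exp(z + V)` for `z ∈ Z`, and since `exp(Z)` is
closed, `exp(Z) = exp(z) * exp(V)`, a translate of a subtorus.

Take now `z ∈ Z` with algebraic coordinates and `y ∈ Z` such that `exp(y)` has algebraic
coordinates. For every integral relation `m` satisfied by `V`, the number `β = m · z = m · y` and
`e^{2πiβ}` are both algebraic, so `β` is rational by the Gelfond–Schneider theorem. Thus `z + V`
contains a rational point `q`, and `exp(Z) = exp(q) * exp(V)`. The Gelfond–Schneider theorem is
proved with an auxiliary function `P(z, e^{lz})` supplied by Siegel's lemma: the Schwarz lemma and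
Liouville's inequality propagate its zeros from the points `x + yβ` with `x, y < M` to those with
`x, y ≤ M`, and letting `M` grow forces it to vanish.
-/

open MvPolynomial

noncomputable section

/-- The coordinatewise exponential map `ℂ^n → (ℂ^*)^n`,
`z ↦ (e^{2π√-1 z_λ})_λ`. -/
def expMap (n : ℕ) (z : Fin n → ℂ) : Fin n → ℂ :=
  fun i => Complex.exp (2 * (Real.pi : ℂ) * Complex.I * z i)

/-- A subset of `ℂ^n` is Zariski closed if it is the common zero locus of a family
of polynomials with complex coefficients. -/
def ZClosed (n : ℕ) (S : Set (Fin n → ℂ)) : Prop :=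
  ∃ P : Set (MvPolynomial (Fin n) ℂ), S = {z | ∀ p ∈ P, eval z p = 0}

/-- Zariski closed and defined over `ℚ̄`: the common zero locus of a family of
polynomials whose coefficients are algebraic over `ℚ`. -/
def ZClosedQbar (n : ℕ) (S : Set (Fin n → ℂ)) : Prop :=
  ∃ P : Set (MvPolynomial (Fin n) ℂ),
    (∀ p ∈ P, ∀ m, IsAlgebraic ℚ (coeff m p)) ∧
    S = {z | ∀ p ∈ P, eval z p = 0}

/-- A subset of `(ℂ^*)^n` (viewed as the set of points of `ℂ^n` with all coordinates
nonzero) is Zariski closed if it is the common zero locus in `(ℂ^*)^n` of a family of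
polynomials. -/
def ZClosedTorus (n : ℕ) (T : Set (Fin n → ℂ)) : Prop :=
  ∃ P : Set (MvPolynomial (Fin n) ℂ),
    T = {z | (∀ i, z i ≠ 0) ∧ ∀ p ∈ P, eval z p = 0}

/-- Zariski closed in `(ℂ^*)^n` and defined over `ℚ̄`. -/
def ZClosedTorusQbar (n : ℕ) (T : Set (Fin n → ℂ)) : Prop :=
  ∃ P : Set (MvPolynomial (Fin n) ℂ),
    (∀ p ∈ P, ∀ m, IsAlgebraic ℚ (coeff m p)) ∧
    T = {z | (∀ i, z i ≠ 0) ∧ ∀ p ∈ P, eval z p = 0}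

/-- A set is irreducible (with respect to a given notion of closed set) if it is
nonempty and not the union of two proper closed subsets of it. -/
def IsIrrOf {α : Type*} (Closed : Set α → Prop) (S : Set α) : Prop :=
  S.Nonempty ∧ ∀ F G : Set α, Closed F → Closed G → S ⊆ F ∪ G → S ⊆ F ∨ S ⊆ G

/-- A subtorus of `(ℂ^*)^n`: the image of a homomorphism `(ℂ^*)^m → (ℂ^*)^n`
given by an integer matrix, `x ↦ (∏_j x_j ^ a_{λ j})_λ`. -/
def IsSubtorus (n : ℕ) (T₀ : Set (Fin n → ℂ)) : Prop :=
  ∃ (m : ℕ) (a : Fin n → Fin m → ℤ),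
    T₀ = {z | ∃ x : Fin m → ℂ, (∀ j, x j ≠ 0) ∧ ∀ l, z l = ∏ j, x j ^ a l j}

/-- A torsion point of `(ℂ^*)^n`: every coordinate is a root of unity. -/
def IsTorsionPoint (n : ℕ) (τ : Fin n → ℂ) : Prop :=
  ∀ i, ∃ k : ℕ, 0 < k ∧ τ i ^ k = 1

/-- A torsion translate of a subtorus: a coset `τ · T₀` with `τ` a torsion point
and `T₀` a subtorus. -/
def IsTorsionTranslateOfSubtorus (n : ℕ) (T : Set (Fin n → ℂ)) : Prop :=
  ∃ (τ : Fin n → ℂ) (T₀ : Set (Fin n → ℂ)),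
    IsTorsionPoint n τ ∧ IsSubtorus n T₀ ∧
    T = (fun z => fun i => τ i * z i) '' T₀

section Derivation

open scoped Polynomial

lemma formallySmooth_of_charZero (k F : Type*) [Field k] [CharZero k] [Field F] [Algebra k F] :
    Algebra.FormallySmooth k F := by
  obtain ⟨ι, v, hv⟩ := exists_isTranscendenceBasis' k F
  have : Algebra.IsAlgebraic (IntermediateField.adjoin k (Set.range v)) F := hv.isAlgebraic_field
  exact .of_algebraicIndependent_of_isSeparable hv.1

lemma charZero_fractionRing_polynomial (k : Type*) [Field k] [CharZero k] :
    CharZero (FractionRing k[X]) :=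
  charZero_of_injective_algebraMap (algebraMap k (FractionRing k[X])).injective

lemma wronskian_ne_natCast_mul {k : Type*} [Field k] [CharZero k] {p q : k[X]} (hp : p ≠ 0)
    (hq : q ≠ 0) {r : ℕ} (hr : r ≠ 0) : p.wronskian q ≠ r * (p * q) := by
  intro h
  have hlt := Polynomial.degree_wronskian_lt_add hp hq
  rw [h, ← Polynomial.C_eq_natCast, Polynomial.degree_C_mul (Nat.cast_ne_zero.2 hr),
    Polynomial.degree_mul] at hlt
  exact hlt.false

variable {k F : Type*} [Field k] [Field F] [Algebra k F]

section PolynomialAlgebra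

variable [Algebra k[X] F] [IsScalarTower k k[X] F]

lemma derivation_algebraMap_polynomial {D : Derivation k F F}
    (hD : D (algebraMap k[X] F .X) = 1) (p : k[X]) :
    D (algebraMap k[X] F p) = algebraMap k[X] F p.derivative := by
  have hp (p : k[X]) : algebraMap k[X] F p = Polynomial.aeval (algebraMap k[X] F .X) p := by
    rw [Polynomial.aeval_algebraMap_apply, Polynomial.aeval_X_left_apply]
  rw [hp, D.map_aeval, hD, smul_eq_mul, mul_one, ← hp]

-- Differentiate the relation and subtract `r` times the relation, with denominators cleared so
-- that the term of index `r` cancels.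
lemma sum_wronskian_mul_pow_eq_zero {D : Derivation k F F} (hD : D (algebraMap k[X] F .X) = 1)
    {h : F} (hDh : D h = h) {s : Finset ℕ} {a : ℕ → k[X]}
    (ha : ∑ i ∈ s, algebraMap k[X] F (a i) * h ^ i = 0) (r : ℕ) :
    ∑ i ∈ s, algebraMap k[X] F ((a r).wronskian (a i) - (r - i) * (a r * a i)) * h ^ i = 0 := by
  have hpow (i : ℕ) : D (h ^ i) = i * h ^ i := by
    rw [D.leibniz_pow, hDh, smul_eq_mul, nsmul_eq_mul]
    rcases i with _ | i
    · rw [Nat.cast_zero, zero_mul, zero_mul]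
    · rw [Nat.add_sub_cancel, pow_succ]
  have hDa : ∑ i ∈ s, algebraMap k[X] F ((a i).derivative + i * a i) * h ^ i = 0 := by
    rw [← map_zero D, ← ha, map_sum]
    refine Finset.sum_congr rfl fun i _ => ?_
    rw [D.leibniz, derivation_algebraMap_polynomial hD, hpow, map_add, map_mul, map_natCast,
      smul_eq_mul, smul_eq_mul]
    ring
  calc
    _ = algebraMap k[X] F (a r) *
          ∑ i ∈ s, algebraMap k[X] F ((a i).derivative + i * a i) * h ^ i -
        algebraMap k[X] F ((a r).derivative + r * a r) *
          ∑ i ∈ s, algebraMap k[X] F (a i) * h ^ i := by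
      simp only [Finset.mul_sum, ← Finset.sum_sub_distrib, Polynomial.wronskian, map_sub, map_add,
        map_mul, map_natCast]
      exact Finset.sum_congr rfl fun i _ => by ring
    _ = 0 := by rw [hDa, ha, mul_zero, mul_zero, sub_zero]

variable [CharZero k] [FaithfulSMul k[X] F]

lemma eq_zero_of_sum_mul_pow_eq_zero {D : Derivation k F F} (hD : D (algebraMap k[X] F .X) = 1)
    {h : F} (hDh : D h = h) (h0 : h ≠ 0) (n : ℕ) {a : ℕ → k[X]}
    (ha : ∑ i ∈ Finset.range n, algebraMap k[X] F (a i) * h ^ i = 0) : ∀ i < n, a i = 0 := by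
  induction n generalizing a with
  | zero => simp
  | succ n ih =>
    have lower : ∑ i ∈ Finset.range n,
        algebraMap k[X] F ((a n).wronskian (a i) - (n - i) * (a n * a i)) * h ^ i = 0 := by
      have := sum_wronskian_mul_pow_eq_zero hD hDh ha n
      rwa [Finset.sum_range_succ, Polynomial.wronskian_self_eq_zero, sub_self, zero_mul, sub_zero,
        map_zero, zero_mul, add_zero] at this
    have hends : a n = 0 ∨ a 0 = 0 := by
      by_contra! hne
      rcases n.eq_zero_or_pos with rfl | hn
      · simp_all
      · have := ih lower 0 hn
        rw [Nat.cast_zero, sub_zero, sub_eq_zero] at this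
        exact wronskian_ne_natCast_mul hne.1 hne.2 hn.ne' this
    rcases hends with hlast | hfirst
    · rw [Finset.sum_range_succ, hlast, map_zero, zero_mul, add_zero] at ha
      exact fun i hi => (Nat.lt_succ_iff_lt_or_eq.1 hi).elim (ih ha i) fun h => h ▸ hlast
    · rw [Finset.sum_range_succ', hfirst, map_zero, zero_mul, add_zero] at ha
      simp only [pow_succ, ← mul_assoc, ← Finset.sum_mul, mul_eq_zero, h0, or_false] at ha
      rintro (_ | i) hi
      exacts [hfirst, ih ha i (by omega)]

lemma transcendental_of_derivation_eq_self {D : Derivation k F F}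
    (hD : D (algebraMap k[X] F .X) = 1) {h : F} (hDh : D h = h) (h0 : h ≠ 0) :
    Transcendental k[X] h := by
  rintro ⟨P, hP0, hP⟩
  simp only [Polynomial.aeval_eq_sum_range, Algebra.smul_def] at hP
  exact Polynomial.leadingCoeff_ne_zero.2 hP0
    (eq_zero_of_sum_mul_pow_eq_zero hD hDh h0 _ hP _ P.natDegree.lt_succ_self)

attribute [local instance] FractionRing.liftAlgebra

open scoped TensorProduct in
open KaehlerDifferential in
lemma kaehlerDifferential_D_algebraMap_X_ne_zero : D k F (algebraMap k[X] F .X) ≠ 0 := by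
  have := charZero_fractionRing_polynomial k
  have : Algebra.FormallySmooth k[X] (FractionRing k[X]) := .of_isLocalization (nonZeroDivisors _)
  have := formallySmooth_of_charZero (FractionRing k[X]) F
  have : Algebra.FormallySmooth k[X] F := .comp k[X] (FractionRing k[X]) F
  have hinj : Function.Injective (mapBaseChange k k[X] F) :=
    (injective_iff_map_eq_zero _).2 fun y hy => by
      obtain ⟨z, rfl⟩ := (Algebra.H1Cotangent.exact_δ_mapBaseChange k k[X] F y).1 hy
      rw [Subsingleton.elim z 0, map_zero]
  intro h0
  have htmul : (1 : F) ⊗ₜ[k[X]] D k k[X] .X = 0 := hinj (by simpa using h0)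
  have := congr(TensorProduct.rid k[X] F ((polynomialEquiv k).toLinearMap.lTensor F $htmul))
  simp at this

lemma exists_derivation_algebraMap_X_ne_zero :
    ∃ D : Derivation k F F, D (algebraMap k[X] F .X) ≠ 0 := by
  obtain ⟨f, hf⟩ := Module.Projective.exists_dual_ne_zero F
    (kaehlerDifferential_D_algebraMap_X_ne_zero (k := k) (F := F))
  exact ⟨f.compDer (KaehlerDifferential.D k F), hf⟩

end PolynomialAlgebra

lemma exists_derivation_apply_ne_zero [CharZero k] {x : F} (hx : Transcendental k x) :
    ∃ D : Derivation k F F, D x ≠ 0 := by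
  let : Algebra k[X] F := (Polynomial.aeval (R := k) x).toAlgebra
  have : IsScalarTower k k[X] F := .of_algebraMap_eq fun r => (Polynomial.aeval_C x r).symm
  have : FaithfulSMul k[X] F :=
    (faithfulSMul_iff_algebraMap_injective _ F).2 (transcendental_iff_injective.1 hx)
  obtain ⟨D, hD⟩ := exists_derivation_algebraMap_X_ne_zero (k := k) (F := F)
  exact ⟨D, fun h0 => hD ((congrArg D (Polynomial.aeval_X x)).trans h0)⟩

attribute [local instance] FractionRing.liftAlgebra in
lemma isAlgebraic_polynomial_of_forall_derivation [CharZero k] [Algebra k[X] F]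
    [IsScalarTower k k[X] F] [FaithfulSMul k[X] F] {h : F}
    (H : ∀ D : Derivation k F F, D (algebraMap k[X] F .X) = 0 → D h = 0) :
    IsAlgebraic k[X] h := by
  have := charZero_fractionRing_polynomial k
  have : IsScalarTower k (FractionRing k[X]) F := .to₁₃₄ k k[X] (FractionRing k[X]) F
  rw [IsFractionRing.isAlgebraic_iff k[X] (FractionRing k[X]) F]
  by_contra hh
  obtain ⟨D, hD⟩ := exists_derivation_apply_ne_zero hh
  refine hD (H (D.restrictScalars k) ?_)
  rw [IsScalarTower.algebraMap_apply k[X] (FractionRing k[X]) F]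
  exact D.map_algebraMap _

-- The hypothesis says that `h` is formally a constant multiple of `exp φ`.
lemma eq_zero_of_forall_derivation_eq_mul [CharZero k] {φ h : F} (hφ : Transcendental k φ)
    (H : ∀ D : Derivation k F F, D h = h * D φ) : h = 0 := by
  by_contra h0
  let : Algebra k[X] F := (Polynomial.aeval (R := k) φ).toAlgebra
  have : IsScalarTower k k[X] F := .of_algebraMap_eq fun r => (Polynomial.aeval_C φ r).symm
  have : FaithfulSMul k[X] F :=
    (faithfulSMul_iff_algebraMap_injective _ F).2 (transcendental_iff_injective.1 hφ)
  have hX : algebraMap k[X] F .X = φ := Polynomial.aeval_X φ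
  obtain ⟨D, hD⟩ := exists_derivation_apply_ne_zero hφ
  refine transcendental_of_derivation_eq_self (D := (D φ)⁻¹ • D) (h := h) ?_ ?_ h0
    (isAlgebraic_polynomial_of_forall_derivation fun d hd => ?_)
  · rw [hX, Derivation.smul_apply, smul_eq_mul, inv_mul_cancel₀ hD]
  · rw [Derivation.smul_apply, H, smul_eq_mul, mul_comm h, inv_mul_cancel_left₀ hD]
  · rw [H, ← hX, hd, mul_zero]

end Derivation

section Flow

open Topology

lemma eqOn_zero_of_hasDerivAt_linear {𝕜 E : Type*} [NontriviallyNormedField 𝕜]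
    [NormedAddCommGroup E] [NormedSpace ℝ E] [NormedSpace 𝕜 E] {A : ℝ → E →L[𝕜] E} {y : ℝ → E}
    {a b t₀ : ℝ} (hA : ContinuousOn A (Set.Icc a b)) (ht₀ : t₀ ∈ Set.Ioo a b)
    (hy : ∀ t ∈ Set.Ioo a b, HasDerivAt y (A t (y t)) t) (h0 : y t₀ = 0) :
    Set.EqOn y 0 (Set.Ioo a b) := by
  obtain ⟨C, hC⟩ := isCompact_Icc.exists_bound_of_continuousOn hA
  refine ODE_solution_unique_of_mem_Ioo (v := fun t => A t) (s := fun _ => Set.univ)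
    (K := C.toNNReal) (fun t ht => ?_) ht₀ (fun t ht => ⟨hy t ht, trivial⟩)
    (fun t _ => ⟨by simp, trivial⟩) h0
  exact ((A t).lipschitz.weaken (NNReal.coe_le_coe.1
    ((hC t (Set.Ioo_subset_Icc_self ht)).trans C.le_coe_toNNReal))).lipschitzOnWith

variable {σ : Type*} [Finite σ] {D : Derivation ℂ (MvPolynomial σ ℂ) (MvPolynomial σ ℂ)}

lemma hasDerivAt_eval {γ : ℝ → σ → ℂ} {t : ℝ}
    (hγ : HasDerivAt γ (fun i => eval (γ t) (D (X i))) t) (p : MvPolynomial σ ℂ) :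
    HasDerivAt (fun s => eval (γ s) p) (eval (γ t) (D p)) t := by
  cases nonempty_fintype σ
  induction p using MvPolynomial.induction_on with
  | C a =>
    rw [show D (C a) = 0 from D.map_algebraMap a, map_zero]
    simpa only [eval_C] using hasDerivAt_const t a
  | add p q hp hq => simpa only [map_add] using hp.fun_add hq
  | mul_X p i hp =>
    simp only [map_mul, eval_X, Derivation.leibniz, map_add, smul_eq_mul]
    exact (hp.fun_mul (hasDerivAt_pi.1 hγ i)).congr_deriv (by ring)

lemma exists_integralCurve (D : Derivation ℂ (MvPolynomial σ ℂ) (MvPolynomial σ ℂ)) (z : σ → ℂ) :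
    ∃ γ : ℝ → σ → ℂ, γ 0 = z ∧ ∃ ε > 0, ∀ t ∈ Set.Ioo (-ε) ε,
      HasDerivAt γ (fun i => eval (γ t) (D (X i))) t := by
  cases nonempty_fintype σ
  have hsmooth : ContDiff ℝ 1 fun w : σ → ℂ => fun i => eval w (D (X i)) :=
    contDiff_pi.2 fun i => (contDiffOn_univ.1
      ((AnalyticOnNhd.eval_mvPolynomial (D (X i))).contDiffOn uniqueDiffOn_univ)).restrict_scalars ℝ
  simpa using hsmooth.contDiffAt.exists_forall_mem_closedBall_exists_eq_forall_mem_Ioo_hasDerivAt₀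
    (x₀ := z) 0

variable {I : Ideal (MvPolynomial σ ℂ)}

open scoped Classical in
-- The values of generators of `I` along the curve solve a homogeneous linear system.
lemma integralCurve_mem_zeroLocus (hD : Set.MapsTo D I I) {γ : ℝ → σ → ℂ} {a b t₀ : ℝ}
    (hγ : ∀ t ∈ Set.Icc a b, HasDerivAt γ (fun i => eval (γ t) (D (X i))) t)
    (ht₀ : t₀ ∈ Set.Ioo a b) (h0 : γ t₀ ∈ zeroLocus ℂ I) {t : ℝ} (ht : t ∈ Set.Ioo a b) :
    γ t ∈ zeroLocus ℂ I := by
  cases nonempty_fintype σ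
  obtain ⟨G, hG⟩ : I.FG := IsNoetherian.noetherian I
  have hGI (g : G) : g.1 ∈ I := hG ▸ Ideal.subset_span g.2
  have hDG (g : G) : ∃ A : G → MvPolynomial σ ℂ, D g = ∑ h, A h * h := by
    obtain ⟨A, hA⟩ := Submodule.mem_span_finset'.1 (hG ▸ hD (hGI g) : D g ∈ Ideal.span _)
    exact ⟨A, hA.symm⟩
  choose A hA using hDG
  let toCLM : Matrix G G ℂ →ₗ[ℂ] (G → ℂ) →L[ℂ] (G → ℂ) :=
    LinearMap.toContinuousLinearMap.toLinearMap ∘ₗ Matrix.toLin'.toLinearMap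
  have hzero := eqOn_zero_of_hasDerivAt_linear (t₀ := t₀) (y := fun s (g : G) => eval (γ s) g.1)
    (A := fun s => toCLM (.of fun g h => eval (γ s) (A g h))) (a := a) (b := b) ?_ ht₀ ?_ ?_ ht
  · have hle : I ≤ RingHom.ker (eval (γ t)) :=
      hG ▸ Ideal.span_le.2 fun g hg => congrFun hzero ⟨g, hg⟩
    exact fun p hp => hle hp
  · have hγc : ContinuousOn γ (Set.Icc a b) :=
      fun s hs => (hγ s hs).continuousAt.continuousWithinAt
    exact toCLM.continuous_of_finiteDimensional.comp_continuousOn <|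
      continuousOn_pi.2 fun g => continuousOn_pi.2 fun h =>
        (MvPolynomial.continuous_eval (A g h)).comp_continuousOn hγc
  · refine fun s hs => hasDerivAt_pi.2 fun g => ?_
    have := hasDerivAt_eval (hγ s (Set.Ioo_subset_Icc_self hs)) g.1
    rw [hA g, map_sum] at this
    simpa [toCLM, Matrix.mulVec, dotProduct] using this
  · exact funext fun g => h0 _ (hGI g)

lemma sum_derivation_mul_exp_eq_zero {ι : Type*} {s : Finset ι} {c f : ι → MvPolynomial σ ℂ}
    (hD : Set.MapsTo D I I)
    (h : ∀ z ∈ zeroLocus ℂ I, ∑ i ∈ s, eval z (c i) * Complex.exp (eval z (f i)) = 0) :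
    ∀ z ∈ zeroLocus ℂ I,
      ∑ i ∈ s, eval z (D (c i) + c i * D (f i)) * Complex.exp (eval z (f i)) = 0 := by
  intro z hz
  obtain ⟨γ, hγ0, ε, hε, hγ⟩ := exists_integralCurve D z
  have hγ' : ∀ t ∈ Set.Icc (-(ε / 2)) (ε / 2), HasDerivAt γ (fun i => eval (γ t) (D (X i))) t :=
    fun t ht => hγ t ⟨by linarith [ht.1], by linarith [ht.2]⟩
  have hmem : (0 : ℝ) ∈ Set.Ioo (-(ε / 2)) (ε / 2) := ⟨by linarith, by linarith⟩
  have hγz : ∀ᶠ t in 𝓝 (0 : ℝ), γ t ∈ zeroLocus ℂ I :=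
    Filter.mem_of_superset (Ioo_mem_nhds hmem.1 hmem.2) fun t ht =>
      integralCurve_mem_zeroLocus hD hγ' hmem (hγ0 ▸ hz) ht
  have hd0 := hγ' 0 (Set.Ioo_subset_Icc_self hmem)
  have hderiv := HasDerivAt.fun_sum fun i (_ : i ∈ s) =>
    (hasDerivAt_eval hd0 (c i)).mul (hasDerivAt_eval hd0 (f i)).cexp
  have hconst : HasDerivAt (fun _ : ℝ => (0 : ℂ)) 0 0 := hasDerivAt_const 0 0
  have := hderiv.unique (hconst.congr_of_eventuallyEq (hγz.mono fun t ht => h (γ t) ht))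
  rw [hγ0] at this
  rw [← this]
  refine Finset.sum_congr rfl fun i _ => ?_
  rw [map_add, map_mul]
  ring

end Flow

section ExponentialIndependence

variable {σ : Type*}

lemma transcendental_algebraMap_residueField {k : Type*} [Field k] [IsAlgClosed k]
    {I : Ideal (MvPolynomial σ k)} [I.IsPrime] {p : MvPolynomial σ k} (hp : ∀ a, p - C a ∉ I) :
    Transcendental k (algebraMap (MvPolynomial σ k) I.ResidueField p) := by
  intro halg
  have := IntermediateField.isAlgebraic_adjoin_simple halg.isIntegral
  have hbot := IntermediateField.eq_bot_of_isAlgClosed_of_isAlgebraic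
    (IntermediateField.adjoin k {algebraMap (MvPolynomial σ k) I.ResidueField p})
  obtain ⟨a, ha⟩ := IntermediateField.mem_bot.1
    (hbot ▸ IntermediateField.mem_adjoin_simple_self k _)
  refine hp a (Ideal.algebraMap_residueField_eq_zero.1 ?_)
  rw [map_sub, ← ha, sub_eq_zero, IsScalarTower.algebraMap_apply k (MvPolynomial σ k),
    MvPolynomial.algebraMap_eq]

variable [Finite σ]

lemma exists_derivation_lift {R : Type*} [CommRing R] (I : Ideal (MvPolynomial σ R)) [I.IsPrime]
    (d : Derivation R I.ResidueField I.ResidueField) :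
    ∃ (D : Derivation R (MvPolynomial σ R) (MvPolynomial σ R)) (q : MvPolynomial σ R), q ∉ I ∧
      ∀ p, algebraMap (MvPolynomial σ R) I.ResidueField (D p) =
        algebraMap (MvPolynomial σ R) I.ResidueField q *
          d (algebraMap (MvPolynomial σ R) I.ResidueField p) := by
  obtain ⟨b, hb⟩ := IsLocalization.exist_integer_multiples_of_finite
    (nonZeroDivisors (MvPolynomial σ R ⧸ I)) fun i =>
      d (algebraMap (MvPolynomial σ R) I.ResidueField (X i))
  obtain ⟨q, hq⟩ := Ideal.Quotient.mk_surjective b.1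
  have hnum (i : σ) : ∃ v, algebraMap (MvPolynomial σ R) I.ResidueField v =
      algebraMap (MvPolynomial σ R) I.ResidueField q *
        d (algebraMap (MvPolynomial σ R) I.ResidueField (X i)) := by
    obtain ⟨a, ha⟩ := hb i
    obtain ⟨v, rfl⟩ := Ideal.Quotient.mk_surjective a
    refine ⟨v, ha.trans ?_⟩
    rw [Algebra.smul_def, ← hq]
    rfl
  choose v hv using hnum
  refine ⟨mkDerivation R v, q, fun hqI => nonZeroDivisors.coe_ne_zero b ?_, fun p => ?_⟩
  · rw [← hq, Ideal.Quotient.eq_zero_iff_mem.2 hqI]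
  · have : (Algebra.linearMap (MvPolynomial σ R) I.ResidueField).compDer (mkDerivation R v) =
        q • d.compAlgebraMap (MvPolynomial σ R) := by
      refine MvPolynomial.derivation_ext fun i => ?_
      simp [Algebra.smul_def, hv]
    simpa [Algebra.smul_def] using DFunLike.congr_fun this p

lemma mem_of_forall_wronskian_sub_mem {k : Type*} [Field k] [IsAlgClosed k] [CharZero k]
    {I : Ideal (MvPolynomial σ k)} [I.IsPrime] {p q φ : MvPolynomial σ k}
    (hφ : ∀ a, φ - C a ∉ I) (hq : q ∉ I)
    (H : ∀ D : Derivation k (MvPolynomial σ k) (MvPolynomial σ k), Set.MapsTo D I I →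
      q * D p - p * D q - p * q * D φ ∈ I) :
    p ∈ I := by
  let π := algebraMap (MvPolynomial σ k) I.ResidueField
  have hπ {u} : π u = 0 ↔ u ∈ I := Ideal.algebraMap_residueField_eq_zero
  have hπq : π q ≠ 0 := mt hπ.1 hq
  suffices π p / π q = 0 from hπ.1 ((div_eq_zero_iff.1 this).resolve_right hπq)
  refine eq_zero_of_forall_derivation_eq_mul (transcendental_algebraMap_residueField hφ) fun d => ?_
  obtain ⟨D, r, hr, hD⟩ := exists_derivation_lift I d
  replace hD (u) : π (D u) = π r * d (π u) := hD u
  have hDI : Set.MapsTo D I I := fun u hu => hπ.1 (by rw [hD, hπ.2 hu, map_zero, mul_zero])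
  have hW : π q * d (π p) - π p * d (π q) - π p * π q * d (π φ) = 0 := by
    refine (mul_eq_zero_iff_left (mt hπ.1 hr)).1 ?_
    rw [← hπ.2 (H D hDI)]
    simp only [map_sub, map_mul, hD]
    ring
  rw [Derivation.leibniz_div, smul_eq_mul, smul_eq_mul, smul_eq_mul]
  change _ = π p / π q * d (π φ)
  field_simp
  linear_combination hW

variable {I : Ideal (MvPolynomial σ ℂ)} [I.IsPrime] {ι : Type*} {c f : ι → MvPolynomial σ ℂ}

lemma mem_of_sum_mul_exp_eq_zero {s : Finset ι}
    (hf : (s : Set ι).Pairwise fun i j => ∀ a, f i - f j - C a ∉ I)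
    (h : ∀ z ∈ zeroLocus ℂ I, ∑ i ∈ s, eval z (c i) * Complex.exp (eval z (f i)) = 0) :
    ∀ i ∈ s, c i ∈ I := by
  classical
  induction s using Finset.induction_on generalizing c with
  | empty => simp
  | insert j s hj ih =>
    rw [Finset.coe_insert, Set.pairwise_insert] at hf
    have hcs : ∀ i ∈ s, c i ∈ I := by
      by_cases hcj : c j ∈ I
      · refine ih hf.1 fun z hz => ?_
        have hcjz : eval z (c j) = 0 := hz _ hcj
        simpa [Finset.sum_insert hj, hcjz] using h z hz
      · intro i hi
        refine mem_of_forall_wronskian_sub_mem (φ := f j - f i)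
          (hf.2 i hi (ne_of_mem_of_not_mem hi hj).symm).1 hcj fun D hD => ?_
        refine ih (c := fun i => c j * D (c i) - c i * D (c j) - c i * c j * D (f j - f i)) hf.1
          (fun z hz => ?_) i hi
        have hz₀ := h z hz
        have hz₁ := sum_derivation_mul_exp_eq_zero hD h z hz
        rw [Finset.sum_insert hj] at hz₀ hz₁
        let c' (i : ι) := D (c i) + c i * D (f i)
        calc _ = eval z (c j) * ∑ i ∈ s, eval z (c' i) * Complex.exp (eval z (f i)) -
              eval z (c' j) * ∑ i ∈ s, eval z (c i) * Complex.exp (eval z (f i)) := by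
              rw [Finset.mul_sum, Finset.mul_sum, ← Finset.sum_sub_distrib]
              refine Finset.sum_congr rfl fun i _ => ?_
              simp only [c', map_sub, map_add, map_mul]
              ring
          _ = 0 := by linear_combination eval z (c j) * hz₁ - eval z (c' j) * hz₀
    refine (Finset.forall_mem_insert ..).2 ⟨?_, hcs⟩
    rw [← IsPrime.vanishingIdeal_zeroLocus (K := ℂ) I, mem_vanishingIdeal_iff]
    intro z hz
    have hz₀ := h z hz
    have hrest : ∑ i ∈ s, eval z (c i) * Complex.exp (eval z (f i)) = 0 :=
      Finset.sum_eq_zero fun i hi =>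
        mul_eq_zero_of_left (show eval z (c i) = 0 from hz _ (hcs i hi)) _
    rw [Finset.sum_insert hj, hrest, add_zero] at hz₀
    exact (mul_eq_zero_iff_right (Complex.exp_ne_zero _)).1 hz₀

end ExponentialIndependence

section LinearRelations

variable {σ M : Type*} [Fintype σ] [AddCommGroup M] {S : Set (σ → M)}

/-- The lattice of integral linear relations satisfied by the coordinates of every vector of `S`. -/
def integerRelations (S : Set (σ → M)) : Submodule ℤ (σ → ℤ) :=
  ⨅ v ∈ S, LinearMap.ker (Fintype.linearCombination ℤ v)

/-- The vectors satisfying all integral linear relations that hold on `S`. For `M = ℂ` this is the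
smallest subspace of `ℂ^σ` which is defined over `ℚ` and contains `S`. -/
def rationalHull (S : Set (σ → M)) : AddSubgroup (σ → M) :=
  ⨅ m ∈ integerRelations S, AddMonoidHom.ker (∑ i, m i • Pi.evalAddMonoidHom (fun _ => M) i)

lemma mem_integerRelations {m : σ → ℤ} :
    m ∈ integerRelations S ↔ ∀ v ∈ S, ∑ i, m i • v i = 0 := by
  simp [integerRelations, Fintype.linearCombination_apply]

lemma mem_rationalHull {v : σ → M} :
    v ∈ rationalHull S ↔ ∀ m ∈ integerRelations S, ∑ i, m i • v i = 0 := by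
  simp [rationalHull, AddSubgroup.mem_iInf]

lemma subset_rationalHull (S : Set (σ → M)) : S ⊆ rationalHull S :=
  fun v hv => mem_rationalHull.2 fun _ hm => mem_integerRelations.1 hm v hv

lemma sum_zsmul_eq_of_sub_mem_rationalHull {m : σ → ℤ} (hm : m ∈ integerRelations S) {v w : σ → M}
    (h : w - v ∈ rationalHull S) : ∑ i, m i • w i = ∑ i, m i • v i := by
  have := mem_rationalHull.1 h m hm
  simpa only [Pi.sub_apply, smul_sub, Finset.sum_sub_distrib, sub_eq_zero] using this

instance [IsAddTorsionFree M] : Module.IsTorsionFree ℤ ((σ → ℤ) ⧸ integerRelations S) := by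
  refine Module.isTorsionFree_iff_smul_eq_zero.2 fun c x => ?_
  obtain ⟨m, rfl⟩ := Submodule.Quotient.mk_surjective _ x
  rw [← Submodule.Quotient.mk_smul, Submodule.Quotient.mk_eq_zero, Submodule.Quotient.mk_eq_zero,
    mem_integerRelations, mem_integerRelations, or_iff_not_imp_left]
  refine fun h hc v hv => (smul_eq_zero_iff_right hc).1 ?_
  simpa only [Finset.smul_sum, Pi.smul_apply, smul_assoc] using h v hv

lemma exists_forall_mem_iff_eq_sum_zsmul (L : Submodule ℤ (σ → ℤ))
    [Module.IsTorsionFree ℤ ((σ → ℤ) ⧸ L)] :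
    ∃ (k : ℕ) (a : σ → Fin k → ℤ), ∀ v : σ → M,
      (∀ m ∈ L, ∑ i, m i • v i = 0) ↔ ∃ t : Fin k → M, ∀ i, v i = ∑ j, a i j • t j := by
  classical
  let b := Module.finBasis ℤ ((σ → ℤ) ⧸ L)
  let e (i : σ) : (σ → ℤ) ⧸ L := L.mkQ (Pi.single i 1)
  refine ⟨_, fun i j => b.repr (e i) j, fun v => ⟨fun hv => ?_, ?_⟩⟩
  · let φ : (σ → ℤ) ⧸ L →ₗ[ℤ] M := L.liftQ (Fintype.linearCombination ℤ v) fun m hm =>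
      (Fintype.linearCombination_apply ℤ v m).trans (hv m hm)
    refine ⟨fun j => φ (b j), fun i => ?_⟩
    calc v i = φ (e i) :=
          ((Fintype.linearCombination_apply_single ℤ v i 1).trans (one_smul ℤ _)).symm
      _ = φ (∑ j, b.repr (e i) j • b j) := by rw [b.sum_repr]
      _ = _ := by simp only [map_sum, map_zsmul]
  · rintro ⟨t, ht⟩ m hm
    have hm0 : ∑ i, m i • e i = 0 := by
      simp only [e, ← map_zsmul, ← map_sum, ← Pi.single_smul', smul_eq_mul, mul_one]
      rw [Finset.univ_sum_single, L.mkQ_apply, Submodule.Quotient.mk_eq_zero]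
      exact hm
    calc ∑ i, m i • v i = ∑ j, b.repr (∑ i, m i • e i) j • t j := by
          simp only [ht, Finset.smul_sum, smul_smul, map_sum, map_zsmul, Finsupp.finsetSum_apply,
            Finset.sum_smul, Finsupp.smul_apply, smul_eq_mul]
          exact Finset.sum_comm
      _ = 0 := by simp only [hm0, map_zero, Finsupp.zero_apply, zero_smul, Finset.sum_const_zero]

end LinearRelations

section ExponentialImage

open Complex (exp)
open scoped Pointwise

section Hull

variable {σ : Type*} [Fintype σ] {I : Ideal (MvPolynomial σ ℂ)}

lemma mem_integerRelations_of_linear_sub_C_mem {m : σ → ℤ} {a b : ℂ} (ha : a ≠ 0)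
    (h : C a * ∑ i, m i • X i - C b ∈ I) :
    m ∈ integerRelations (zeroLocus ℂ I - zeroLocus ℂ I) := by
  have heval (z) (hz : z ∈ zeroLocus ℂ I) : a * ∑ i, m i • z i = b := by
    simpa [sub_eq_zero] using hz _ h
  refine mem_integerRelations.2 ?_
  rintro _ ⟨z, hz, w, hw, rfl⟩
  refine mul_left_cancel₀ ha ?_
  simp only [Pi.sub_apply, smul_sub, Finset.sum_sub_distrib, mul_sub, heval z hz, heval w hw,
    sub_self, mul_zero]

lemma sum_mul_exp_eq_zero_of_sub_mem_rationalHull [I.IsPrime] {ι : Type*} {s : Finset ι}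
    {c : ι → ℂ} {m : ι → σ → ℤ} {a : ℂ} (ha : a ≠ 0)
    (h : ∀ z ∈ zeroLocus ℂ I, ∑ k ∈ s, c k * exp (a * ∑ i, m k i • z i) = 0)
    {z w : σ → ℂ} (hz : z ∈ zeroLocus ℂ I)
    (hw : w - z ∈ rationalHull (zeroLocus ℂ I - zeroLocus ℂ I)) :
    ∑ k ∈ s, c k * exp (a * ∑ i, m k i • w i) = 0 := by
  classical
  let L := integerRelations (zeroLocus ℂ I - zeroLocus ℂ I)
  let r (u : σ → ℤ) : σ → ℤ := (L.mkQ u).out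
  have hmkr (u) : L.mkQ (r u) = L.mkQ u := Quotient.out_eq _
  let f (u : σ → ℤ) : MvPolynomial σ ℂ := C a * ∑ i, u i • X i
  have hf (u) (w : σ → ℂ) : eval w (f u) = a * ∑ i, u i • w i := by simp [f]
  have hfsub (u v) : f u - f v = f (u - v) := by
    simp only [f, Pi.sub_apply, sub_smul, Finset.sum_sub_distrib, mul_sub]
  let A (u : σ → ℤ) : ℂ := ∑ k ∈ s with r (m k) = u, c k * exp (eval z (f (m k - u)))
  have regroup (w) (hw : w - z ∈ rationalHull (zeroLocus ℂ I - zeroLocus ℂ I)) :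
      ∑ k ∈ s, c k * exp (eval w (f (m k))) =
        ∑ u ∈ s.image fun k => r (m k), A u * exp (eval w (f u)) := by
    rw [← Finset.sum_fiberwise_of_maps_to fun k hk => Finset.mem_image_of_mem (r ∘ m) hk]
    refine Finset.sum_congr rfl fun u _ => ?_
    rw [Finset.sum_mul]
    refine Finset.sum_congr rfl fun k hk => ?_
    obtain rfl := (Finset.mem_filter.1 hk).2
    have hL : m k - r (m k) ∈ L := (Submodule.Quotient.eq _).1 (hmkr (m k)).symm
    rw [hf _ z, ← sum_zsmul_eq_of_sub_mem_rationalHull hL hw, ← hf _ w, mul_assoc,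
      ← Complex.exp_add, ← map_add, ← hfsub, sub_add_cancel]
  have hA : ∀ u ∈ s.image fun k => r (m k), C (A u) ∈ I := by
    refine mem_of_sum_mul_exp_eq_zero (f := f) (fun u hu v hv huv b hb => huv ?_) fun w hw => ?_
    · obtain ⟨k, -, rfl⟩ := Finset.mem_image.1 hu
      obtain ⟨l, -, rfl⟩ := Finset.mem_image.1 hv
      rw [hfsub] at hb
      have : L.mkQ (r (m k)) = L.mkQ (r (m l)) :=
        (Submodule.Quotient.eq _).2 (mem_integerRelations_of_linear_sub_C_mem ha hb)
      rw [hmkr, hmkr] at this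
      exact congrArg Quotient.out this
    · simp only [eval_C]
      rw [← regroup w (subset_rationalHull _ ⟨w, hw, z, hz, rfl⟩)]
      simpa only [hf] using h w hw
  simp only [← hf]
  rw [regroup w hw]
  refine Finset.sum_eq_zero fun u hu => mul_eq_zero_of_left ?_ _
  simpa using hz _ (hA u hu)

end Hull

variable {n : ℕ}

lemma ZClosed.zeroLocus_vanishingIdeal {Z : Set (Fin n → ℂ)} (hZ : ZClosed n Z) :
    zeroLocus ℂ (vanishingIdeal ℂ Z) = Z := by
  obtain ⟨P, rfl⟩ := hZ
  refine Set.Subset.antisymm (fun z hz p hp => hz p ?_) (zeroLocus_vanishingIdeal_le _)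
  exact fun w hw => hw p hp

lemma IsIrrOf.isPrime_vanishingIdeal {Z : Set (Fin n → ℂ)} (hZ : IsIrrOf (ZClosed n) Z) :
    (vanishingIdeal ℂ Z).IsPrime := by
  obtain ⟨⟨z, hz⟩, hirr⟩ := hZ
  refine Ideal.isPrime_iff.2 ⟨(Ideal.ne_top_iff_one _).2 fun h => ?_, fun {p q} hpq => ?_⟩
  · simpa using h z hz
  · refine hirr {w | eval w p = 0} {w | eval w q = 0} ⟨{p}, by simp⟩ ⟨{q}, by simp⟩ fun w hw => ?_
    exact mul_eq_zero.1 ((map_mul (eval w) p q).symm.trans (hpq w hw))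

lemma exp_mul_sum_zsmul {ι : Type*} (s : Finset ι) (a : ℂ) (m : ι → ℤ) (z : ι → ℂ) :
    exp (a * ∑ i ∈ s, m i • z i) = ∏ i ∈ s, exp (a * z i) ^ m i := by
  rw [Finset.mul_sum, Complex.exp_sum]
  refine Finset.prod_congr rfl fun i _ => ?_
  rw [← Complex.exp_int_mul, zsmul_eq_mul, mul_left_comm]

lemma eval_expMap (p : MvPolynomial (Fin n) ℂ) (z : Fin n → ℂ) :
    eval (expMap n z) p =
      ∑ m ∈ p.support, coeff m p * exp (2 * Real.pi * Complex.I * ∑ i, (m i : ℤ) • z i) := by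
  simp only [eval_eq', expMap, exp_mul_sum_zsmul, zpow_natCast]

theorem image_expMap_eq_image_rationalHull {Z : Set (Fin n → ℂ)} (hZ : ZClosed n Z)
    (hZirr : IsIrrOf (ZClosed n) Z) (hE : ZClosedTorus n (expMap n '' Z)) {z : Fin n → ℂ}
    (hz : z ∈ Z) :
    expMap n '' Z = expMap n '' {w | w - z ∈ rationalHull (Z - Z)} := by
  have := hZirr.isPrime_vanishingIdeal
  have hV := hZ.zeroLocus_vanishingIdeal
  obtain ⟨P, hP⟩ := hE
  refine Set.Subset.antisymm
    (Set.image_mono fun w hw => subset_rationalHull _ ⟨w, hw, z, hz, rfl⟩) ?_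
  rintro _ ⟨w, hw, rfl⟩
  rw [hP]
  refine ⟨fun i => Complex.exp_ne_zero _, fun p hp => ?_⟩
  rw [eval_expMap]
  refine sum_mul_exp_eq_zero_of_sub_mem_rationalHull (I := vanishingIdeal ℂ Z) (z := z)
    Complex.two_pi_I_ne_zero (fun x hx => ?_) (by rwa [hV]) (by rwa [hV])
  rw [hV] at hx
  have hxP : expMap n x ∈ {z | (∀ i, z i ≠ 0) ∧ ∀ p ∈ P, eval z p = 0} :=
    hP ▸ Set.mem_image_of_mem _ hx
  rw [← eval_expMap]
  exact hxP.2 p hp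

lemma expMap_add (z w : Fin n → ℂ) : expMap n (z + w) = expMap n z * expMap n w :=
  funext fun i => by simp only [expMap, Pi.add_apply, mul_add, Complex.exp_add, Pi.mul_apply]

lemma image_expMap_sub_mem (A : Set (Fin n → ℂ)) (z : Fin n → ℂ) :
    expMap n '' {w | w - z ∈ A} = (fun u i => expMap n z i * u i) '' (expMap n '' A) := by
  rw [Set.image_image]
  refine Set.Subset.antisymm ?_ ?_
  · rintro _ ⟨w, hw, rfl⟩
    exact ⟨w - z, hw, by rw [← add_sub_cancel z w, expMap_add, add_sub_cancel]; rfl⟩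
  · rintro _ ⟨w, hw, rfl⟩
    exact ⟨z + w, by simpa using hw, expMap_add z w⟩

lemma isSubtorus_image_expMap_rationalHull (S : Set (Fin n → ℂ)) :
    IsSubtorus n (expMap n '' rationalHull S) := by
  obtain ⟨k, a, ha⟩ := exists_forall_mem_iff_eq_sum_zsmul (M := ℂ) (integerRelations S)
  refine ⟨k, a, Set.Subset.antisymm ?_ ?_⟩
  · rintro _ ⟨v, hv, rfl⟩
    obtain ⟨t, ht⟩ := (ha v).1 (mem_rationalHull.1 hv)
    refine ⟨expMap k t, fun j => Complex.exp_ne_zero _, fun i => ?_⟩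
    simp only [expMap, ht, exp_mul_sum_zsmul]
  · rintro y ⟨x, hx, hy⟩
    have hlog (j) : 2 * Real.pi * Complex.I * (Complex.log (x j) / (2 * Real.pi * Complex.I)) =
        Complex.log (x j) := mul_div_cancel₀ _ Complex.two_pi_I_ne_zero
    refine ⟨fun i => ∑ j, a i j • (Complex.log (x j) / (2 * Real.pi * Complex.I)),
      mem_rationalHull.2 ((ha _).2 ⟨_, fun i => rfl⟩), funext fun i => ?_⟩
    simp only [expMap, exp_mul_sum_zsmul, hlog, Complex.exp_log (hx _), hy]

end ExponentialImage

section Schwarz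

variable {f : ℂ → ℂ} {s : Finset ℂ}

lemma exists_differentiable_eq_prod_sub_mul (hf : Differentiable ℂ f) (hs : ∀ a ∈ s, f a = 0) :
    ∃ g : ℂ → ℂ, Differentiable ℂ g ∧ ∀ z, f z = (∏ a ∈ s, (z - a)) * g z := by
  classical
  induction s using Finset.induction_on with
  | empty => exact ⟨f, hf, by simp⟩
  | insert a s ha ih =>
    obtain ⟨g, hg, hfg⟩ := ih fun b hb => hs b (Finset.mem_insert_of_mem hb)
    have hga : g a = 0 := by
      have h := hs a (Finset.mem_insert_self a s)
      rw [hfg, mul_eq_zero, Finset.prod_eq_zero_iff] at h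
      refine h.resolve_left fun ⟨b, hb, hab⟩ => ha ?_
      rwa [sub_eq_zero.1 hab]
    refine ⟨dslope g a, ?_, fun z => ?_⟩
    · exact differentiableOn_univ.1
        ((Complex.differentiableOn_dslope Filter.univ_mem).2 hg.differentiableOn)
    · have h := sub_smul_dslope g a z
      rw [hga, sub_zero, smul_eq_mul] at h
      rw [Finset.prod_insert ha, hfg, ← h]
      ring

lemma norm_le_mul_pow_card_of_zeros {r R B : ℝ} (hf : Differentiable ℂ f)
    (hs : ∀ a ∈ s, f a = 0) (hsr : ∀ a ∈ s, ‖a‖ ≤ r) (hrR : r < R)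
    (hB : ∀ z : ℂ, ‖z‖ = R → ‖f z‖ ≤ B) {w : ℂ} (hw : ‖w‖ ≤ r) :
    ‖f w‖ ≤ B * (2 * r / (R - r)) ^ s.card := by
  obtain ⟨g, hg, hfg⟩ := exists_differentiable_eq_prod_sub_mul hf hs
  have hRr : 0 < R - r := sub_pos.2 hrR
  have hR : 0 < R := (norm_nonneg w).trans_lt (hw.trans_lt hrR)
  have hg_le : ‖g w‖ ≤ B / (R - r) ^ s.card := by
    refine Complex.norm_le_of_forall_mem_frontier_norm_le (U := Metric.ball 0 R)
      Metric.isBounded_ball hg.diffContOnCl (fun z hz => ?_)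
      (subset_closure (mem_ball_zero_iff.2 (hw.trans_lt hrR)))
    rw [frontier_ball _ hR.ne', mem_sphere_zero_iff_norm] at hz
    rw [le_div_iff₀ (pow_pos hRr _), mul_comm]
    refine le_trans ?_ (hB z hz)
    rw [hfg, norm_mul, norm_prod]
    gcongr
    rw [← Finset.prod_const]
    refine Finset.prod_le_prod (fun _ _ => hRr.le) fun a ha => ?_
    linarith [norm_sub_norm_le z a, hsr a ha]
  calc ‖f w‖ = (∏ a ∈ s, ‖w - a‖) * ‖g w‖ := by rw [hfg, norm_mul, norm_prod]
    _ ≤ (∏ _a ∈ s, 2 * r) * (B / (R - r) ^ s.card) := by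
      gcongr with a ha
      · exact Finset.prod_nonneg fun _ _ => by linarith [norm_nonneg w]
      · linarith [norm_sub_le w a, hsr a ha]
    _ = B * (2 * r / (R - r)) ^ s.card := by rw [Finset.prod_const, div_pow]; ring

end Schwarz

section Size

variable {K : Type*} [Field K] [NumberField K]

/-- A size for elements of a number field: `T ^ e` is a denominator of `x` and every conjugate of
`x` has absolute value at most `B ^ e`. The same exponent serves both bounds, so that exponents add
up under multiplication. -/
def HasSize (T : ℕ) (B : ℝ) (e : ℕ) (x : K) : Prop :=
  IsIntegral ℤ ((T : K) ^ e * x) ∧ NumberField.house x ≤ B ^ e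

namespace HasSize

variable {T : ℕ} {B : ℝ} {e f : ℕ} {x y : K}

lemma isIntegral_pow_mul (hx : HasSize T B e x) (h : e ≤ f) : IsIntegral ℤ ((T : K) ^ f * x) := by
  obtain ⟨k, rfl⟩ := Nat.exists_eq_add_of_le' h
  rw [pow_add, mul_assoc]
  exact ((isIntegral_natCast T).pow k).mul hx.1

lemma mono (hx : HasSize T B e x) (hB : 1 ≤ B) (h : e ≤ f) : HasSize T B f x :=
  ⟨hx.isIntegral_pow_mul h, hx.2.trans (pow_le_pow_right₀ hB h)⟩

lemma mono_base {B' : ℝ} (hx : HasSize T B e x) (hB : 0 ≤ B) (h : B ≤ B') : HasSize T B' e x :=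
  ⟨hx.1, hx.2.trans (pow_le_pow_left₀ hB h e)⟩

lemma of_ringOfIntegers {x : NumberField.RingOfIntegers K}
    (hx : NumberField.house (x : K) ≤ B ^ e) : HasSize T B e (x : K) :=
  ⟨((isIntegral_natCast T).pow e).mul x.isIntegral_coe, hx⟩

lemma natCast {k : ℕ} (hk : k ≤ B) : HasSize T B 1 (k : K) := by
  refine ⟨((isIntegral_natCast T).pow 1).mul (isIntegral_natCast k), ?_⟩
  have h := NumberField.house_intCast (K := K) k
  rw [Int.cast_natCast] at h
  simpa [h] using hk

lemma mul (hx : HasSize T B e x) (hy : HasSize T B f y) : HasSize T B (e + f) (x * y) := by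
  constructor
  · rw [pow_add, mul_mul_mul_comm]
    exact hx.1.mul hy.1
  · rw [pow_add]
    exact (NumberField.house_mul_le x y).trans (mul_le_mul hx.2 hy.2
      (NumberField.house_nonneg y) ((NumberField.house_nonneg x).trans hx.2))

lemma pow (hx : HasSize T B e x) (k : ℕ) : HasSize T B (k * e) (x ^ k) := by
  constructor
  · rw [mul_comm k e, pow_mul, ← mul_pow]
    exact hx.1.pow k
  · rw [mul_comm k e, pow_mul]
    exact (NumberField.house_pow_le x k).trans
      (pow_le_pow_left₀ (NumberField.house_nonneg x) hx.2 k)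

lemma sum {ι : Type*} {s : Finset ι} {x : ι → K} (hx : ∀ i ∈ s, HasSize T B e (x i))
    (hB : 0 ≤ B) (hs : s.card ≤ B ^ f) : HasSize T B (e + f) (∑ i ∈ s, x i) := by
  constructor
  · rw [Finset.mul_sum]
    exact IsIntegral.sum _ fun i hi => (hx i hi).isIntegral_pow_mul (Nat.le_add_right e f)
  · calc NumberField.house (∑ i ∈ s, x i) ≤ ∑ i ∈ s, NumberField.house (x i) :=
          NumberField.house_sum_le_sum_house s x
      _ ≤ s.card * B ^ e := by
          simpa using Finset.sum_le_card_nsmul s _ _ fun i hi => (hx i hi).2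
      _ ≤ B ^ f * B ^ e := by gcongr
      _ = B ^ (e + f) := by rw [pow_add, mul_comm]

lemma add (hx : HasSize T B e x) (hy : HasSize T B e y) (hB : 2 ≤ B) :
    HasSize T B (e + 1) (x + y) := by
  have h := sum (s := Finset.univ) (x := ![x, y]) (f := 1) (T := T) (B := B) (e := e)
    (by simp [Fin.forall_fin_two, hx, hy]) (by linarith) (by simpa using hB)
  simpa using h

lemma house_pow_mul_le (hx : HasSize T B e x) (hTB : T ≤ B) :
    NumberField.house ((T : K) ^ e * x) ≤ B ^ (2 * e) := by
  rw [← Nat.cast_pow, NumberField.house_nat_mul, Nat.cast_pow, two_mul, pow_add]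
  exact mul_le_mul (pow_le_pow_left₀ T.cast_nonneg hTB e) hx.2 (NumberField.house_nonneg x)
    (pow_nonneg (T.cast_nonneg.trans hTB) e)

/-- Liouville's inequality. -/
lemma one_le_norm_mul (hx : HasSize T B e x) (hx0 : x ≠ 0) (hT : T ≠ 0) (hTB : T ≤ B)
    (σ : K →+* ℂ) : 1 ≤ ‖σ x‖ * B ^ (2 * Module.finrank ℚ K * e) := by
  have hT1 : (1 : ℝ) ≤ T := by exact_mod_cast Nat.one_le_iff_ne_zero.2 hT
  set y : K := (T : K) ^ e * x
  have hy0 : y ≠ 0 := mul_ne_zero (pow_ne_zero e (Nat.cast_ne_zero.2 hT)) hx0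
  obtain ⟨k, hk⟩ := IsIntegrallyClosed.isIntegral_iff.1 (Algebra.isIntegral_norm ℚ hx.1)
  have hnorm : (1 : ℝ) ≤ ‖Algebra.norm ℚ y‖ := by
    have hk0 : k ≠ 0 := by
      rintro rfl
      exact Algebra.norm_ne_zero_iff.2 hy0 (by rw [← hk, map_zero])
    rw [← hk, eq_intCast, Int.norm_cast_rat, Int.norm_eq_abs]
    exact_mod_cast Int.one_le_abs hk0
  have hσy : ‖σ y‖ ≤ ‖σ x‖ * B ^ e := by
    rw [map_mul, map_pow, map_natCast, norm_mul, norm_pow, Complex.norm_natCast, mul_comm]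
    gcongr
  have hexp : e + 2 * e * (Module.finrank ℚ K - 1) ≤ 2 * Module.finrank ℚ K * e := by
    obtain ⟨d, hd⟩ := Nat.exists_eq_add_of_le' (Module.finrank_pos (R := ℚ) (M := K))
    rw [hd, Nat.add_sub_cancel]
    nlinarith
  calc (1 : ℝ) ≤ ‖σ y‖ * NumberField.house y ^ (Module.finrank ℚ K - 1) :=
        hnorm.trans (NumberField.norm_norm_le_norm_mul_house_pow y σ)
    _ ≤ ‖σ x‖ * B ^ e * (B ^ (2 * e)) ^ (Module.finrank ℚ K - 1) := by
        have hy_nonneg := NumberField.house_nonneg y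
        have hy_le := hx.house_pow_mul_le hTB
        have hB0 : 0 ≤ B := T.cast_nonneg.trans hTB
        gcongr
    _ = ‖σ x‖ * B ^ (e + 2 * e * (Module.finrank ℚ K - 1)) := by
        rw [← pow_mul, mul_assoc, ← pow_add]
    _ ≤ ‖σ x‖ * B ^ (2 * Module.finrank ℚ K * e) := by
        gcongr
        exact hT1.trans hTB

end HasSize

lemma exists_forall_eventually_hasSize (s : Finset K) :
    ∃ T : ℕ, T ≠ 0 ∧ ∀ x ∈ s, ∀ᶠ B : ℝ in Filter.atTop, HasSize T B 1 x := by
  obtain ⟨t, ht, hts⟩ := exists_integral_multiples ℤ ℚ s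
  refine ⟨t.natAbs, Int.natAbs_ne_zero.2 ht, fun x hx => ?_⟩
  filter_upwards [Filter.eventually_ge_atTop (NumberField.house x)] with B hB
  have htx : IsIntegral ℤ ((t : K) * x) := by simpa using hts x hx
  refine ⟨?_, by simpa using hB⟩
  rw [pow_one, ← Int.cast_natCast, Int.natCast_natAbs]
  rcases abs_choice t with h | h <;> rw [h]
  · exact htx
  · simpa using htx.neg

lemma exists_siegel_bound (K : Type*) [Field K] [NumberField K] :
    ∃ C : ℝ, ∀ {α β : Type*} [Fintype α] [Fintype β]
      {A : Matrix α β (NumberField.RingOfIntegers K)} {B : ℝ}, A ≠ 0 → 0 < Fintype.card α →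
      Fintype.card β = 2 * Fintype.card α → (∀ i j, NumberField.house (A i j : K) ≤ B) →
      ∃ ξ : β → NumberField.RingOfIntegers K, ξ ≠ 0 ∧ A.mulVec ξ = 0 ∧
        ∀ j, NumberField.house (ξ j : K) ≤ C * (C * Fintype.card β * B) := by
  classical
  refine ⟨?_, fun {α β} _ _ A B hA hα hβ hB => ?bound⟩
  case bound =>
    obtain ⟨ξ, hξ0, hAξ, hξ⟩ := NumberField.house.exists_ne_zero_int_vec_house_le K A hA hα
      (by omega : _ < Fintype.card β) rfl hB rfl
    refine ⟨ξ, hξ0, hAξ, fun j => (hξ j).trans_eq ?_⟩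
    have hα' : (Fintype.card α : ℝ) ≠ 0 := by exact_mod_cast hα.ne'
    have hexp : (Fintype.card α : ℝ) / (Fintype.card β - Fintype.card α) = 1 := by
      rw [hβ]
      push_cast
      field_simp
      ring
    rw [hexp, Real.rpow_one]

lemma exists_ne_zero_mulVec_eq_zero_hasSize (K : Type*) [Field K] [NumberField K] :
    ∃ C : ℝ, ∀ {α β : Type*} [Fintype α] [Fintype β] {A : Matrix α β K} {T e f : ℕ} {B : ℝ},
      A ≠ 0 → 0 < Fintype.card α → Fintype.card β = 2 * Fintype.card α → T ≠ 0 → T ≤ B → C ≤ B →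
      (∀ i j, HasSize T B e (A i j)) → Fintype.card β ≤ B ^ f →
      ∃ ξ : β → K, ξ ≠ 0 ∧ A.mulVec ξ = 0 ∧ ∀ j, HasSize T B (2 * e + f + 2) (ξ j) := by
  obtain ⟨C, hC⟩ := exists_siegel_bound K
  refine ⟨|C|, fun {α β} _ _ A T e f B hA hα hβ hT hTB hCB hsize hcard => ?_⟩
  have hB : 0 ≤ B := T.cast_nonneg.trans hTB
  have hT' : (T : K) ^ e ≠ 0 := pow_ne_zero e (Nat.cast_ne_zero.2 hT)
  let A' : Matrix α β (NumberField.RingOfIntegers K) := fun i j => ⟨_, (hsize i j).1⟩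
  have hA' (i j) : (A' i j : K) = (T : K) ^ e * A i j := rfl
  have hA'_ne : A' ≠ 0 := by
    refine fun h0 => hA (funext₂ fun i j => ?_)
    have hij := hA' i j
    rw [h0] at hij
    simpa [hT] using hij
  obtain ⟨ξ, hξ0, hAξ, hξ⟩ := hC hA'_ne hα hβ fun i j => (hsize i j).house_pow_mul_le hTB
  refine ⟨fun j => ξ j, fun h0 => hξ0 (funext fun j => ?_), funext fun i => ?_,
    fun j => .of_ringOfIntegers ?_⟩
  · exact NumberField.RingOfIntegers.coe_eq_zero_iff.1 (congrFun h0 j)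
  · have hsum := congrArg (algebraMap (NumberField.RingOfIntegers K) K) (congrFun hAξ i)
    simp only [Matrix.mulVec, dotProduct, Pi.zero_apply, map_sum, map_mul, map_zero, hA',
      mul_assoc] at hsum
    rw [← Finset.mul_sum, mul_eq_zero] at hsum
    exact hsum.resolve_left hT'
  · calc NumberField.house (ξ j : K) ≤ |C| * (|C| * Fintype.card β * B ^ (2 * e)) := by
          refine (hξ j).trans_eq ?_
          simp only [← mul_assoc, abs_mul_abs_self]
      _ ≤ B * (B * B ^ f * B ^ (2 * e)) := by gcongr
      _ = B ^ (2 * e + f + 2) := by ring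

end Size

section EvalCoeffs

/-- The value at `(u, v)` of the polynomial in two variables with coefficients `ξ`, of degree less
than `m` in the first variable and less than `n` in the second. -/
def evalCoeffs {R : Type*} [CommSemiring R] {m n : ℕ} (ξ : Fin m × Fin n → R) (u v : R) : R :=
  ∑ k, ξ k * (u ^ (k.1 : ℕ) * v ^ (k.2 : ℕ))

variable {m n : ℕ}

lemma map_evalCoeffs {R S : Type*} [CommSemiring R] [CommSemiring S] (φ : R →+* S)
    (ξ : Fin m × Fin n → R) (u v : R) :
    φ (evalCoeffs ξ u v) = evalCoeffs (φ ∘ ξ) (φ u) (φ v) := by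
  simp [evalCoeffs]

section Bounds

variable {B : ℝ} {s i j f : ℕ}

lemma val_mul_add_val_mul_le (k : Fin m × Fin n) : k.1 * i + k.2 * j ≤ m * i + n * j := by
  gcongr <;> omega

lemma HasSize.pow_mul_pow {K : Type*} [Field K] [NumberField K] {T : ℕ} {u v : K}
    (hu : HasSize T B i u) (hv : HasSize T B j v) (hB : 1 ≤ B) (k : Fin m × Fin n) :
    HasSize T B (m * i + n * j) (u ^ (k.1 : ℕ) * v ^ (k.2 : ℕ)) :=
  ((hu.pow k.1).mul (hv.pow k.2)).mono hB (val_mul_add_val_mul_le k)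

lemma HasSize.evalCoeffs {K : Type*} [Field K] [NumberField K] {T : ℕ} {ξ : Fin m × Fin n → K}
    {u v : K} (hξ : ∀ k, HasSize T B s (ξ k)) (hu : HasSize T B i u) (hv : HasSize T B j v)
    (hB : 1 ≤ B) (hcard : m * n ≤ B ^ f) :
    HasSize T B (s + (m * i + n * j) + f) (evalCoeffs ξ u v) :=
  HasSize.sum (fun k _ => (hξ k).mul (hu.pow_mul_pow hv hB k)) (zero_le_one.trans hB)
    (by simpa using hcard)

lemma norm_evalCoeffs_le {ξ : Fin m × Fin n → ℂ} {u v : ℂ} (hξ : ∀ k, ‖ξ k‖ ≤ B ^ s)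
    (hu : ‖u‖ ≤ B ^ i) (hv : ‖v‖ ≤ B ^ j) (hB : 1 ≤ B) (hcard : m * n ≤ B ^ f) :
    ‖evalCoeffs ξ u v‖ ≤ B ^ (s + (m * i + n * j) + f) := by
  have : 0 ≤ B := zero_le_one.trans hB
  have hterm (k : Fin m × Fin n) :
      ‖ξ k * (u ^ (k.1 : ℕ) * v ^ (k.2 : ℕ))‖ ≤ B ^ (s + (m * i + n * j)) :=
    calc ‖ξ k * (u ^ (k.1 : ℕ) * v ^ (k.2 : ℕ))‖
        = ‖ξ k‖ * (‖u‖ ^ (k.1 : ℕ) * ‖v‖ ^ (k.2 : ℕ)) := by simp only [norm_mul, norm_pow]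
      _ ≤ B ^ s * ((B ^ i) ^ (k.1 : ℕ) * (B ^ j) ^ (k.2 : ℕ)) := by gcongr; exact hξ k
      _ = B ^ (s + (k.1 * i + k.2 * j)) := by
        rw [← pow_mul', ← pow_mul', ← pow_add, ← pow_add]
      _ ≤ B ^ (s + (m * i + n * j)) :=
        pow_le_pow_right₀ hB (Nat.add_le_add_left (val_mul_add_val_mul_le k) s)
  calc ‖evalCoeffs ξ u v‖ ≤ (m * n) * B ^ (s + (m * i + n * j)) := by
        simpa [evalCoeffs] using norm_sum_le_of_le Finset.univ fun k _ => hterm k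
    _ ≤ B ^ f * B ^ (s + (m * i + n * j)) := by gcongr
    _ = B ^ (s + (m * i + n * j) + f) := by rw [pow_add _ _ f, mul_comm]

end Bounds

lemma eq_zero_of_forall_evalCoeffs_exp_eq_zero {ξ : Fin m × Fin n → ℂ} {l : ℂ} (hl : l ≠ 0)
    (h : ∀ z, evalCoeffs ξ z (Complex.exp (l * z)) = 0) : ξ = 0 := by
  let f (j : Fin n) : MvPolynomial Unit ℂ := C (j * l) * X ()
  let c (j : Fin n) : MvPolynomial Unit ℂ :=
    ∑ i : Fin m, monomial (Finsupp.single () (i : ℕ)) (ξ (i, j))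
  have hf : ((Finset.univ : Finset (Fin n)) : Set (Fin n)).Pairwise
      fun i j => ∀ a, f i - f j - C a ∉ (⊥ : Ideal (MvPolynomial Unit ℂ)) := by
    intro i _ j _ hij a hmem
    have hcoeff := congrArg (coeff (Finsupp.single () 1)) ((Submodule.mem_bot _).1 hmem)
    have hsingle : (0 : Unit →₀ ℕ) ≠ Finsupp.single () 1 := by simp [Finsupp.ext_iff]
    simp only [f, coeff_sub, coeff_C_mul, coeff_X_same, coeff_C, if_neg hsingle, coeff_zero,
      mul_one, sub_zero] at hcoeff
    rw [← sub_mul, mul_eq_zero, sub_eq_zero, Nat.cast_inj] at hcoeff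
    exact hij (Fin.ext (hcoeff.resolve_right hl))
  have hc : ∀ j ∈ Finset.univ, c j ∈ (⊥ : Ideal (MvPolynomial Unit ℂ)) := by
    refine mem_of_sum_mul_exp_eq_zero hf fun z _ => ?_
    rw [← h (z ()), evalCoeffs, Fintype.sum_prod_type_right]
    refine Finset.sum_congr rfl fun j _ => ?_
    rw [map_sum, Finset.sum_mul]
    refine Finset.sum_congr rfl fun i _ => ?_
    simp [f, eval_monomial, ← Complex.exp_nat_mul, mul_assoc]
  funext ⟨i, j⟩
  have hcoeff := congrArg (coeff (Finsupp.single () (i : ℕ)))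
    ((Submodule.mem_bot _).1 (hc j (Finset.mem_univ j)))
  simpa [c, coeff_sum, coeff_monomial, Finsupp.single_left_inj, Fin.val_inj] using hcoeff

end EvalCoeffs

section GelfondSchneider

lemma eventually_forall_sq_le_pow_lt_two_pow (D : ℕ) :
    ∀ᶠ N : ℕ in Filter.atTop, ∀ M, N ^ 2 ≤ M → (M : ℝ) ^ (D * N) < 2 ^ M := by
  have hlog2 : 0 < Real.log 2 := Real.log_pos one_lt_two
  have hlog : ∀ᶠ x : ℝ in Filter.atTop, D * Real.log x ≤ Real.log 2 / 2 * √x := by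
    have h := ((isLittleO_log_rpow_atTop (one_half_pos (α := ℝ))).const_mul_left (D : ℝ)).def
      (half_pos hlog2)
    filter_upwards [h, Filter.eventually_ge_atTop 0] with x hx hx0
    rw [Real.norm_of_nonneg (by positivity : 0 ≤ x ^ (1 / 2 : ℝ)), ← Real.sqrt_eq_rpow] at hx
    exact (le_abs_self _).trans hx
  obtain ⟨N₀, hN₀⟩ := Filter.eventually_atTop.1 (tendsto_natCast_atTop_atTop.eventually hlog)
  filter_upwards [Filter.eventually_ge_atTop (max N₀ 1)] with N hN M hNM
  have hM : 0 < M := (pow_pos (le_of_max_le_right hN) 2).trans_le hNM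
  have hMlog := hN₀ M ((le_of_max_le_left hN).trans ((Nat.le_self_pow two_ne_zero N).trans hNM))
  have hNsqrt : (N : ℝ) ≤ √M := Real.le_sqrt_of_sq_le (by exact_mod_cast hNM)
  have hMpos : (0 : ℝ) < M := by exact_mod_cast hM
  rw [← Real.log_lt_log_iff (by positivity) (by positivity), Real.log_pow, Real.log_pow]
  calc ((D * N : ℕ) : ℝ) * Real.log M = D * Real.log M * N := by push_cast; ring
    _ ≤ Real.log 2 / 2 * √M * √M := by gcongr
    _ = M * Real.log 2 / 2 := by rw [mul_assoc, Real.mul_self_sqrt hMpos.le]; ring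
    _ < M * Real.log 2 := half_lt_self (mul_pos hMpos hlog2)

lemma injective_natCast_add_mul {β : ℂ} (hβ : β ∉ Set.range ((↑) : ℚ → ℂ)) :
    Function.Injective fun p : ℕ × ℕ => (p.1 : ℂ) + p.2 * β := by
  rintro ⟨x, y⟩ ⟨x', y'⟩ h
  by_cases hy : y = y'
  · subst hy
    simpa using h
  · have hne : (y : ℂ) - y' ≠ 0 := sub_ne_zero.2 (Nat.cast_injective.ne hy)
    refine absurd ⟨(x' - x : ℚ) / (y - y'), ?_⟩ hβ
    push_cast
    rw [div_eq_iff hne]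
    linear_combination -h

lemma norm_natCast_add_mul_le {x y M : ℕ} (hx : x ≤ M) (hy : y ≤ M) (β : ℂ) :
    ‖(x : ℂ) + y * β‖ ≤ M * (1 + ‖β‖) :=
  calc ‖(x : ℂ) + y * β‖ ≤ x + y * ‖β‖ := by simpa using norm_add_le (x : ℂ) (y * β)
    _ ≤ M + M * ‖β‖ := by gcongr
    _ = M * (1 + ‖β‖) := by ring

variable {K : Type*} [Field K]

/-- The value at the point `x + y b` of the auxiliary function `evalCoeffs ξ z (exp (l z))`, when
`a` and `c` stand for `exp l` and `exp (l b)`. -/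
def gridValue {m n : ℕ} (a b c : K) (ξ : Fin m × Fin n → K) (x y : ℕ) : K :=
  evalCoeffs ξ (x + y * b) (a ^ x * c ^ y)

lemma map_gridValue {σ : K →+* ℂ} {l : ℂ} {a b c : K} (ha : σ a = Complex.exp l)
    (hc : σ c = Complex.exp (l * σ b)) {m n : ℕ} (ξ : Fin m × Fin n → K) (x y : ℕ) :
    σ (gridValue a b c ξ x y) =
      evalCoeffs (σ ∘ ξ) (x + y * σ b) (Complex.exp (l * (x + y * σ b))) := by
  have hexp : Complex.exp (l * (x + y * σ b)) = Complex.exp l ^ x * Complex.exp (l * σ b) ^ y := by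
    rw [← Complex.exp_nat_mul, ← Complex.exp_nat_mul, ← Complex.exp_add]
    ring_nf
  rw [gridValue, map_evalCoeffs, hexp]
  simp [ha, hc]

variable [NumberField K]

/-- The conditions on `M`, all satisfied for `N ^ 2 ≤ M` when `N` is large, under which powers of
`M` bound every quantity attached to the points `x + y b` with `x, y ≤ M`, for auxiliary functions
with `2 N ^ 3` by `N` coefficients. -/
structure IsAdmissible (σ : K →+* ℂ) (l : ℂ) (a b c : K) (T N M : ℕ) : Prop where
  denom_ne_zero : T ≠ 0
  denom_le : T ≤ M
  pos : 0 < N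
  sq_le : N ^ 2 ≤ M
  two_le : 2 ≤ M
  hasSize_a : HasSize T M 1 a
  hasSize_b : HasSize T M 1 b
  hasSize_c : HasSize T M 1 c
  radius_le : 5 * (1 + ‖σ b‖) ≤ M
  exp_le : Real.exp (‖l‖ * (5 * (1 + ‖σ b‖))) ≤ M
  pow_lt : (M : ℝ) ^ (93 * Module.finrank ℚ K * N) < 2 ^ M

lemma exists_eventually_isAdmissible (σ : K →+* ℂ) (l : ℂ) (a b c : K) :
    ∃ T : ℕ, ∀ᶠ N : ℕ in Filter.atTop, ∀ M, N ^ 2 ≤ M → IsAdmissible σ l a b c T N M := by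
  classical
  obtain ⟨T, hT, hsize⟩ := exists_forall_eventually_hasSize {a, b, c}
  simp only [Finset.mem_insert, Finset.mem_singleton, forall_eq_or_imp, forall_eq] at hsize
  have hcast := tendsto_natCast_atTop_atTop (R := ℝ)
  have hsq : Filter.Tendsto (fun N : ℕ => N ^ 2) Filter.atTop Filter.atTop :=
    Filter.tendsto_pow_atTop two_ne_zero
  refine ⟨T, ?_⟩
  filter_upwards [Filter.eventually_ge_atTop 1,
    eventually_forall_sq_le_pow_lt_two_pow (93 * Module.finrank ℚ K),
    hsq.eventually_forall_ge_atTop (Filter.eventually_ge_atTop (max 2 T)),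
    hsq.eventually_forall_ge_atTop (hcast.eventually hsize.1),
    hsq.eventually_forall_ge_atTop (hcast.eventually hsize.2.1),
    hsq.eventually_forall_ge_atTop (hcast.eventually hsize.2.2),
    hsq.eventually_forall_ge_atTop (hcast.eventually_ge_atTop (5 * (1 + ‖σ b‖))),
    hsq.eventually_forall_ge_atTop
      (hcast.eventually_ge_atTop (Real.exp (‖l‖ * (5 * (1 + ‖σ b‖)))))]
    with N hN hpow hmax ha hb hc hr he M hNM
  have hM := max_le_iff.1 (hmax M hNM)
  exact ⟨hT, hM.2, hN, hNM, hM.1, ha M hNM, hb M hNM, hc M hNM, hr M hNM, he M hNM, hpow M hNM⟩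

lemma two_mul_cube_mul_le {M N : ℕ} (hM : 2 ≤ M) (hNM : N ^ 2 ≤ M) :
    ((2 * N ^ 3 : ℕ) : ℝ) * N ≤ (M : ℝ) ^ 3 := by
  have : 2 * N ^ 3 * N ≤ M ^ 3 :=
    calc 2 * N ^ 3 * N = 2 * (N ^ 2 * N ^ 2) := by ring
      _ ≤ M * (M * M) := by gcongr
      _ = M ^ 3 := by ring
  exact_mod_cast this

namespace IsAdmissible

variable {σ : K →+* ℂ} {l : ℂ} {a b c : K} {T N M : ℕ}
  (h : IsAdmissible σ l a b c T N M)
include h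

lemma two_le_cast : (2 : ℝ) ≤ M := by exact_mod_cast h.two_le

lemma one_le_cast : (1 : ℝ) ≤ M := one_le_two.trans h.two_le_cast

lemma hasSize_add_mul {x y : ℕ} (hx : x ≤ M) (hy : y ≤ M) :
    HasSize T M 3 ((x : K) + y * b) :=
  ((HasSize.natCast (by exact_mod_cast hx)).mono h.one_le_cast one_le_two).add
    ((HasSize.natCast (by exact_mod_cast hy)).mul h.hasSize_b) h.two_le_cast

lemma hasSize_pow_mul_pow {x y : ℕ} (hx : x ≤ M) (hy : y ≤ M) :
    HasSize T M (2 * M) (a ^ x * c ^ y) :=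
  ((h.hasSize_a.pow x).mul (h.hasSize_c.pow y)).mono h.one_le_cast (by omega)

lemma hasSize_gridValue {ξ : Fin (2 * N ^ 3) × Fin N → K}
    (hξ : ∀ k, HasSize T M (21 * N ^ 3) (ξ k)) {x y : ℕ} (hx : x ≤ M) (hy : y ≤ M) :
    HasSize T M (32 * (N * M)) (gridValue a b c ξ x y) := by
  refine ((HasSize.evalCoeffs hξ (h.hasSize_add_mul hx hy) (h.hasSize_pow_mul_pow hx hy)
    h.one_le_cast (two_mul_cube_mul_le h.two_le h.sq_le)).mono h.one_le_cast ?_)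
  nlinarith [Nat.mul_le_mul_left N h.sq_le, Nat.mul_le_mul h.pos h.two_le]

lemma norm_evalCoeffs_exp_le {ξ : Fin (2 * N ^ 3) × Fin N → K}
    (hξ : ∀ k, HasSize T M (21 * N ^ 3) (ξ k)) {z : ℂ} (hz : ‖z‖ = 5 * (M * (1 + ‖σ b‖))) :
    ‖evalCoeffs (σ ∘ ξ) z (Complex.exp (l * z))‖ ≤ (M : ℝ) ^ (29 * (N * M)) := by
  have hz_le : ‖z‖ ≤ (M : ℝ) ^ 2 :=
    calc ‖z‖ = M * (5 * (1 + ‖σ b‖)) := by rw [hz]; ring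
      _ ≤ M * M := by gcongr; exact h.radius_le
      _ = (M : ℝ) ^ 2 := (sq _).symm
  have hexp_le : ‖Complex.exp (l * z)‖ ≤ (M : ℝ) ^ M :=
    calc ‖Complex.exp (l * z)‖ ≤ Real.exp ‖l * z‖ := Complex.norm_exp_le_exp_norm _
      _ = Real.exp (‖l‖ * (5 * (1 + ‖σ b‖))) ^ M := by
        rw [← Real.exp_nat_mul, norm_mul, hz]
        ring_nf
      _ ≤ (M : ℝ) ^ M := by gcongr; exact h.exp_le
  have hσξ (k) : ‖(σ ∘ ξ) k‖ ≤ (M : ℝ) ^ (21 * N ^ 3) :=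
    (NumberField.norm_embedding_le_house (ξ k) σ).trans (hξ k).2
  refine (norm_evalCoeffs_le hσξ hz_le hexp_le h.one_le_cast
    (two_mul_cube_mul_le h.two_le h.sq_le)).trans (pow_le_pow_right₀ h.one_le_cast ?_)
  nlinarith [Nat.mul_le_mul_left N h.sq_le, Nat.mul_le_mul h.pos h.two_le]

lemma hasSize_monomial (hNM : N ^ 2 = M) {x y : ℕ} (hx : x ≤ M) (hy : y ≤ M)
    (k : Fin (2 * N ^ 3) × Fin N) :
    HasSize T M (8 * N ^ 3) (((x : K) + y * b) ^ (k.1 : ℕ) * (a ^ x * c ^ y) ^ (k.2 : ℕ)) :=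
  ((h.hasSize_add_mul hx hy).pow_mul_pow (h.hasSize_pow_mul_pow hx hy) h.one_le_cast k).mono
    h.one_le_cast (by rw [← hNM]; ring_nf; rfl)

variable (hb : σ b ∉ Set.range ((↑) : ℚ → ℂ)) (ha : σ a = Complex.exp l)
  (hc : σ c = Complex.exp (l * σ b))
include hb ha hc

lemma norm_evalCoeffs_exp_le_div {ξ : Fin (2 * N ^ 3) × Fin N → K}
    (hξ : ∀ k, HasSize T M (21 * N ^ 3) (ξ k))
    (hzero : ∀ x < M, ∀ y < M, gridValue a b c ξ x y = 0) {w : ℂ}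
    (hw : ‖w‖ ≤ M * (1 + ‖σ b‖)) :
    ‖evalCoeffs (σ ∘ ξ) w (Complex.exp (l * w))‖ ≤ (M : ℝ) ^ (29 * (N * M)) / 2 ^ (M * M) := by
  classical
  set r : ℝ := M * (1 + ‖σ b‖)
  have hr : 0 < r := mul_pos (by linarith [h.two_le_cast]) (by positivity)
  let S : Finset ℂ := (Finset.range M ×ˢ Finset.range M).image fun p => (p.1 : ℂ) + p.2 * σ b
  have hcard : S.card = M * M := by
    rw [Finset.card_image_of_injective _ (injective_natCast_add_mul hb), Finset.card_product,
      Finset.card_range]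
  have hS : ∀ z ∈ S, evalCoeffs (σ ∘ ξ) z (Complex.exp (l * z)) = 0 ∧ ‖z‖ ≤ r := by
    refine Finset.forall_mem_image.2 fun p hp => ?_
    obtain ⟨hx, hy⟩ := Finset.mem_product.1 hp
    rw [Finset.mem_range] at hx hy
    refine ⟨?_, norm_natCast_add_mul_le hx.le hy.le _⟩
    rw [← map_gridValue ha hc, hzero _ hx _ hy, map_zero]
  have hdiff : Differentiable ℂ fun z => evalCoeffs (σ ∘ ξ) z (Complex.exp (l * z)) := by
    unfold evalCoeffs
    fun_prop
  have hschwarz := norm_le_mul_pow_card_of_zeros hdiff (fun z hz => (hS z hz).1)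
    (fun z hz => (hS z hz).2) (R := 5 * r) (by linarith)
    (fun z hz => h.norm_evalCoeffs_exp_le hξ hz) hw
  have hratio : 2 * r / (5 * r - r) = 2⁻¹ := by
    field_simp
    norm_num
  rwa [hcard, hratio, inv_pow, ← div_eq_mul_inv] at hschwarz

lemma norm_mul_pow_lt_one {ξ : Fin (2 * N ^ 3) × Fin N → K}
    (hξ : ∀ k, HasSize T M (21 * N ^ 3) (ξ k))
    (hzero : ∀ x < M, ∀ y < M, gridValue a b c ξ x y = 0) {w : ℂ}
    (hw : ‖w‖ ≤ M * (1 + ‖σ b‖)) :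
    ‖evalCoeffs (σ ∘ ξ) w (Complex.exp (l * w))‖ *
      (M : ℝ) ^ (2 * Module.finrank ℚ K * (32 * (N * M))) < 1 := by
  set d := Module.finrank ℚ K
  have hd : 1 ≤ d := Module.finrank_pos
  have hexp : 29 * (N * M) + 2 * d * (32 * (N * M)) ≤ 93 * d * N * M := by
    nlinarith [Nat.mul_le_mul_right (N * M) hd]
  calc ‖evalCoeffs (σ ∘ ξ) w (Complex.exp (l * w))‖ * (M : ℝ) ^ (2 * d * (32 * (N * M)))
      ≤ (M : ℝ) ^ (29 * (N * M)) / 2 ^ (M * M) * (M : ℝ) ^ (2 * d * (32 * (N * M))) := by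
        gcongr
        exact h.norm_evalCoeffs_exp_le_div hb ha hc hξ hzero hw
    _ = (M : ℝ) ^ (29 * (N * M) + 2 * d * (32 * (N * M))) / 2 ^ (M * M) := by
        rw [div_mul_eq_mul_div, pow_add]
    _ ≤ ((M : ℝ) ^ (93 * d * N)) ^ M / (2 ^ M) ^ M := by
        rw [← pow_mul, ← pow_mul]
        gcongr
        exact h.one_le_cast
    _ < 1 := by
        rw [div_lt_one (by positivity)]
        exact pow_lt_pow_left₀ h.pow_lt (by positivity) (by linarith [h.two_le])

lemma gridValue_eq_zero_of_le {ξ : Fin (2 * N ^ 3) × Fin N → K}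
    (hξ : ∀ k, HasSize T M (21 * N ^ 3) (ξ k))
    (hzero : ∀ x < M, ∀ y < M, gridValue a b c ξ x y = 0) {x y : ℕ} (hx : x ≤ M) (hy : y ≤ M) :
    gridValue a b c ξ x y = 0 := by
  by_contra hne
  have hlt := h.norm_mul_pow_lt_one hb ha hc hξ hzero
    (norm_natCast_add_mul_le hx hy (σ b))
  rw [← map_gridValue ha hc] at hlt
  exact hlt.not_ge ((h.hasSize_gridValue hξ hx hy).one_le_norm_mul hne h.denom_ne_zero
    (by exact_mod_cast h.denom_le) σ)

end IsAdmissible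

lemma exists_ne_zero_forall_gridValue_eq_zero (K : Type*) [Field K] [NumberField K] :
    ∃ C : ℝ, ∀ {σ : K →+* ℂ} {l : ℂ} {a b c : K} {T N M : ℕ}, IsAdmissible σ l a b c T N M →
      N ^ 2 = M → C ≤ M →
      ∃ ξ : Fin (2 * N ^ 3) × Fin N → K, ξ ≠ 0 ∧ (∀ k, HasSize T M (21 * N ^ 3) (ξ k)) ∧
        ∀ x < M, ∀ y < M, gridValue a b c ξ x y = 0 := by
  obtain ⟨C, hC⟩ := exists_ne_zero_mulVec_eq_zero_hasSize K
  refine ⟨C, fun {σ l a b c T N M} h hNM hCM => ?_⟩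
  have hM : 0 < M := by linarith [h.two_le]
  have hN3 : 0 < N ^ 3 := pow_pos h.pos 3
  let A : Matrix (Fin M × Fin M) (Fin (2 * N ^ 3) × Fin N) K :=
    fun p k => ((p.1 : K) + p.2 * b) ^ (k.1 : ℕ) * (a ^ (p.1 : ℕ) * c ^ (p.2 : ℕ)) ^ (k.2 : ℕ)
  have hA_ne : A ≠ 0 := fun hA => by
    simpa [A] using congrFun₂ hA (⟨0, hM⟩, ⟨0, hM⟩) (⟨0, Nat.mul_pos two_pos hN3⟩, ⟨0, h.pos⟩)
  obtain ⟨ξ, hξ0, hAξ, hξ⟩ := hC hA_ne (by simp [hM]) (by simp [← hNM]; ring) h.denom_ne_zero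
    (by exact_mod_cast h.denom_le) hCM
    (fun p k => h.hasSize_monomial hNM p.1.2.le p.2.2.le k)
    (by simpa using two_mul_cube_mul_le h.two_le h.sq_le)
  refine ⟨ξ, hξ0, fun k => (hξ k).mono h.one_le_cast (by omega), fun x hx y hy => ?_⟩
  refine Eq.trans ?_ (congrFun hAξ (⟨x, hx⟩, ⟨y, hy⟩))
  exact Finset.sum_congr rfl fun k _ => mul_comm _ _

section Vanishing

variable {σ : K →+* ℂ} {l : ℂ} {a b c : K} {T N : ℕ}
  (h : ∀ M, N ^ 2 ≤ M → IsAdmissible σ l a b c T N M)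
  (hb : σ b ∉ Set.range ((↑) : ℚ → ℂ)) (ha : σ a = Complex.exp l)
  (hc : σ c = Complex.exp (l * σ b))
  {ξ : Fin (2 * N ^ 3) × Fin N → K} (hξ : ∀ k, HasSize T (N ^ 2 : ℕ) (21 * N ^ 3) (ξ k))
  (hzero : ∀ x < N ^ 2, ∀ y < N ^ 2, gridValue a b c ξ x y = 0)
include h hb ha hc hξ hzero

lemma forall_gridValue_eq_zero {M : ℕ} (hM : N ^ 2 ≤ M) :
    ∀ x < M, ∀ y < M, gridValue a b c ξ x y = 0 := by
  induction M, hM using Nat.le_induction with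
  | base => exact hzero
  | succ M hM ih =>
    exact fun x hx y hy => (h M hM).gridValue_eq_zero_of_le hb ha hc
      (fun k => (hξ k).mono_base (Nat.cast_nonneg _) (by exact_mod_cast hM)) ih
      (Nat.lt_succ_iff.1 hx) (Nat.lt_succ_iff.1 hy)

lemma eq_zero_of_gridValue_eq_zero (hl : l ≠ 0) : ξ = 0 := by
  suffices hF : ∀ w, evalCoeffs (σ ∘ ξ) w (Complex.exp (l * w)) = 0 from
    funext fun k => (map_eq_zero σ).1 (congrFun (eq_zero_of_forall_evalCoeffs_exp_eq_zero hl hF) k)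
  intro w
  by_contra hw
  obtain ⟨M, hM⟩ := exists_nat_ge
    (max ((N ^ 2 : ℕ) : ℝ) (max ‖w‖ ‖evalCoeffs (σ ∘ ξ) w (Complex.exp (l * w))‖⁻¹))
  obtain ⟨hNM, hwM, hFM⟩ : N ^ 2 ≤ M ∧ ‖w‖ ≤ M ∧ _ := by
    simpa only [max_le_iff, Nat.cast_le] using hM
  have hadm := h M hNM
  have hw_le : ‖w‖ ≤ M * (1 + ‖σ b‖) :=
    hwM.trans (le_mul_of_one_le_right M.cast_nonneg (by simp))
  refine (hadm.norm_mul_pow_lt_one hb ha hc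
    (fun k => (hξ k).mono_base (Nat.cast_nonneg _) (by exact_mod_cast hNM))
    (forall_gridValue_eq_zero h hb ha hc hξ hzero hNM) hw_le).not_ge ?_
  have hd : 0 < Module.finrank ℚ K := Module.finrank_pos
  have hexp : 2 * Module.finrank ℚ K * (32 * (N * M)) ≠ 0 := by
    have := hadm.pos
    have := hadm.two_le
    positivity
  calc (1 : ℝ) ≤ ‖evalCoeffs (σ ∘ ξ) w (Complex.exp (l * w))‖ * M :=
        (inv_le_iff_one_le_mul₀' (norm_pos_iff.2 hw)).1 hFM
    _ ≤ _ := by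
        gcongr
        exact le_self_pow₀ hadm.one_le_cast hexp

end Vanishing

lemma mem_range_ratCast_of_map_eq_exp {σ : K →+* ℂ} {l : ℂ} {a b c : K} (hl : l ≠ 0)
    (ha : σ a = Complex.exp l) (hc : σ c = Complex.exp (l * σ b)) :
    σ b ∈ Set.range ((↑) : ℚ → ℂ) := by
  by_contra hb
  obtain ⟨T, hT⟩ := exists_eventually_isAdmissible σ l a b c
  obtain ⟨C, hC⟩ := exists_ne_zero_forall_gridValue_eq_zero K
  have hsq : Filter.Tendsto (fun N : ℕ => ((N ^ 2 : ℕ) : ℝ)) Filter.atTop Filter.atTop :=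
    tendsto_natCast_atTop_atTop.comp (Filter.tendsto_pow_atTop two_ne_zero)
  obtain ⟨N, hN, hCN⟩ := (hT.and (hsq.eventually_ge_atTop C)).exists
  obtain ⟨ξ, hξ0, hξ, hzero⟩ := hC (hN (N ^ 2) le_rfl) rfl hCN
  exact hξ0 (eq_zero_of_gridValue_eq_zero hN hb ha hc hξ hzero hl)

theorem transcendental_exp_mul {l β : ℂ} (hl : l ≠ 0) (hβ : IsAlgebraic ℚ β)
    (hβℚ : β ∉ Set.range ((↑) : ℚ → ℂ)) (hexp : IsAlgebraic ℚ (Complex.exp l)) :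
    Transcendental ℚ (Complex.exp (l * β)) := by
  intro halg
  let S : Set ℂ := {Complex.exp l, β, Complex.exp (l * β)}
  have : FiniteDimensional ℚ (IntermediateField.adjoin ℚ S) := by
    refine IntermediateField.finiteDimensional_adjoin fun x hx => ?_
    rcases hx with rfl | rfl | rfl
    exacts [hexp.isIntegral, hβ.isIntegral, halg.isIntegral]
  have : NumberField (IntermediateField.adjoin ℚ S) := ⟨⟩
  have hmem {x} (hx : x ∈ S) := IntermediateField.subset_adjoin ℚ S hx
  exact hβℚ (mem_range_ratCast_of_map_eq_exp (σ := algebraMap (IntermediateField.adjoin ℚ S) ℂ)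
    (a := ⟨_, hmem (Or.inl rfl)⟩) (b := ⟨β, hmem (Or.inr (Or.inl rfl))⟩)
    (c := ⟨_, hmem (Or.inr (Or.inr rfl))⟩) hl rfl rfl)

end GelfondSchneider

section AlgebraicPoints

lemma exists_eval_ne_zero_of_aeval_ne_zero {σ k L : Type*} [Finite σ] [Field k] [IsAlgClosed k]
    [Field L] [Algebra k L] (z : σ → L) {h : MvPolynomial σ k} (hh : aeval z h ≠ 0) :
    ∃ w : σ → k, (∀ p : MvPolynomial σ k, aeval z p = 0 → eval w p = 0) ∧ eval w h ≠ 0 := by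
  have hmem {p} : p ∈ vanishingIdeal k {z} ↔ aeval z p = 0 := mem_vanishingIdeal_singleton_iff z p
  rw [Ne, ← hmem, ← IsPrime.vanishingIdeal_zeroLocus (K := k) (vanishingIdeal k {z}),
    mem_vanishingIdeal_iff] at hh
  push Not at hh
  obtain ⟨w, hw, hwh⟩ := hh
  exact ⟨w, fun p hp => hw p (hmem.2 hp), hwh⟩

lemma exists_isAlgebraic_zero {σ k L : Type*} [Finite σ] [Field k] [Field L] [IsAlgClosed L]
    [Algebra k L] {P : Set (MvPolynomial σ L)} (hP : ∀ p ∈ P, ∀ m, IsAlgebraic k (coeff m p))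
    {h : MvPolynomial σ k} {z : σ → L} (hz : ∀ p ∈ P, eval z p = 0) (hh : aeval z h ≠ 0) :
    ∃ w : σ → L, (∀ i, IsAlgebraic k (w i)) ∧ (∀ p ∈ P, eval w p = 0) ∧ aeval w h ≠ 0 := by
  let K := algebraicClosure k L
  have : IsAlgClosed K := (algebraicClosure.isAlgClosure k L).isAlgClosed
  have heval (w : σ → K) (q : MvPolynomial σ K) :
      aeval (algebraMap K L ∘ w) q = algebraMap K L (eval w q) := aeval_algebraMap_apply L w q
  rw [← aeval_map_algebraMap K] at hh
  obtain ⟨w, hw, hwh⟩ := exists_eval_ne_zero_of_aeval_ne_zero z hh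
  refine ⟨algebraMap K L ∘ w, fun i => mem_algebraicClosure_iff.1 (w i).2, fun p hp => ?_, ?_⟩
  · obtain ⟨q, rfl⟩ : p ∈ Set.range (map (algebraMap K L)) := by
      refine mem_range_map_iff_coeffs_subset.2 fun c hc => ?_
      obtain ⟨m, -, rfl⟩ := mem_coeffs_iff.1 hc
      exact ⟨⟨coeff m p, mem_algebraicClosure_iff.2 (hP p hp m)⟩, rfl⟩
    rw [eval_map]
    exact (heval w q).trans (by rw [hw q ((eval_map _ _ q).symm.trans (hz _ hp)), map_zero])
  · rw [← aeval_map_algebraMap K, heval]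
    exact (map_ne_zero _).2 hwh

variable {n : ℕ} {S : Set (Fin n → ℂ)}

lemma ZClosedQbar.exists_isAlgebraic (hS : ZClosedQbar n S) (hne : S.Nonempty) :
    ∃ z ∈ S, ∀ i, IsAlgebraic ℚ (z i) := by
  obtain ⟨P, hP, rfl⟩ := hS
  obtain ⟨z, hz⟩ := hne
  obtain ⟨w, hw, hwP, -⟩ := exists_isAlgebraic_zero (h := 1) hP hz (by simp)
  exact ⟨w, hwP, hw⟩

lemma ZClosedTorusQbar.exists_isAlgebraic (hS : ZClosedTorusQbar n S) (hne : S.Nonempty) :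
    ∃ z ∈ S, ∀ i, IsAlgebraic ℚ (z i) := by
  obtain ⟨P, hP, rfl⟩ := hS
  obtain ⟨z, hz0, hz⟩ := hne
  obtain ⟨w, hw, hwP, hw0⟩ := exists_isAlgebraic_zero (h := ∏ i, X i) hP hz
    (by simpa [Finset.prod_eq_zero_iff] using hz0)
  exact ⟨w, ⟨by simpa [Finset.prod_eq_zero_iff] using hw0, hwP⟩, hw⟩

lemma ZClosedQbar.zClosed (hS : ZClosedQbar n S) : ZClosed n S :=
  let ⟨P, _, h⟩ := hS; ⟨P, h⟩

lemma ZClosedTorusQbar.zClosedTorus (hS : ZClosedTorusQbar n S) : ZClosedTorus n S :=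
  let ⟨P, _, h⟩ := hS; ⟨P, h⟩

end AlgebraicPoints

section TorsionTranslate

open scoped Pointwise

variable {n : ℕ}

lemma isTorsionPoint_expMap_ratCast (q : Fin n → ℚ) : IsTorsionPoint n (expMap n fun i => q i) := by
  refine fun i => ⟨(q i).den, (q i).den_pos, ?_⟩
  rw [expMap, ← Complex.exp_nat_mul]
  refine Complex.exp_eq_one_iff.2 ⟨(q i).num, ?_⟩
  have hq : (q i : ℂ) * (q i).den = (q i).num := mod_cast Rat.mul_den_eq_num (q i)
  rw [← hq]
  ring

lemma exists_ratCast_sub_mem_rationalHull {σ : Type*} [Fintype σ] {K : Type*} [Field K] [CharZero K]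
    {S : Set (σ → K)} {z : σ → K}
    (hz : ∀ m ∈ integerRelations S, ∑ i, m i • z i ∈ Set.range ((↑) : ℚ → K)) :
    ∃ q : σ → ℚ, (fun i => (q i : K)) - z ∈ rationalHull S := by
  obtain ⟨π, hπ⟩ := LinearMap.exists_leftInverse_of_injective (Algebra.linearMap ℚ K)
    (LinearMap.ker_eq_bot.2 (algebraMap ℚ K).injective)
  replace hπ (q : ℚ) : π (q : K) = q := LinearMap.congr_fun hπ q
  refine ⟨fun i => π (z i), mem_rationalHull.2 fun m hm => ?_⟩
  obtain ⟨q, hq⟩ := hz m hm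
  have hcast : ∑ i, m i • (π (z i) : K) = ((π (∑ i, m i • z i) : ℚ) : K) := by
    simp only [map_sum, map_zsmul, Rat.cast_sum]
    simp only [zsmul_eq_mul, Rat.cast_mul, Rat.cast_intCast]
  simp only [Pi.sub_apply, smul_sub, Finset.sum_sub_distrib, hcast, ← hq, hπ, sub_self]

lemma sum_zsmul_mem_range_ratCast {m : Fin n → ℤ} {z y : Fin n → ℂ}
    (hzy : ∑ i, m i • z i = ∑ i, m i • y i) (hz : ∀ i, IsAlgebraic ℚ (z i))
    (hy : ∀ i, IsAlgebraic ℚ (expMap n y i)) :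
    ∑ i, m i • z i ∈ Set.range ((↑) : ℚ → ℂ) := by
  by_contra hℚ
  refine transcendental_exp_mul Complex.two_pi_I_ne_zero ?_ hℚ ?_ ?_
  · exact mem_algebraicClosure_iff.1 <|
      sum_mem fun i _ => zsmul_mem (mem_algebraicClosure_iff.2 (hz i)) _
  · rw [Complex.exp_two_pi_mul_I]
    exact isAlgebraic_one
  · rw [hzy, exp_mul_sum_zsmul]
    exact mem_algebraicClosure_iff.1 <|
      prod_mem fun i _ => zpow_mem (mem_algebraicClosure_iff.2 (hy i)) _

theorem exp_image_is_torsion_translate_general {Z : Set (Fin n → ℂ)} (hZ : ZClosed n Z)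
    (hZirr : IsIrrOf (ZClosed n) Z) (hE : ZClosedTorus n (expMap n '' Z)) {z y : Fin n → ℂ}
    (hz : z ∈ Z) (hzalg : ∀ i, IsAlgebraic ℚ (z i)) (hy : y ∈ Z)
    (hyalg : ∀ i, IsAlgebraic ℚ (expMap n y i)) :
    IsTorsionTranslateOfSubtorus n (expMap n '' Z) := by
  obtain ⟨q, hq⟩ : ∃ q : Fin n → ℚ, (fun i => (q i : ℂ)) - z ∈ rationalHull (Z - Z) :=
    exists_ratCast_sub_mem_rationalHull fun m hm =>
      have hzy : z - y ∈ rationalHull (Z - Z) := subset_rationalHull _ ⟨z, hz, y, hy, rfl⟩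
      sum_zsmul_mem_range_ratCast (sum_zsmul_eq_of_sub_mem_rationalHull hm hzy) hzalg hyalg
  have hcoset : {w | w - z ∈ rationalHull (Z - Z)} =
      {w | w - (fun i => (q i : ℂ)) ∈ (rationalHull (Z - Z) : Set (Fin n → ℂ))} :=
    Set.ext fun w => by
      rw [Set.mem_ofPred, ← sub_add_sub_cancel w, AddSubgroup.add_mem_cancel_right _ hq]
      rfl
  refine ⟨_, _, isTorsionPoint_expMap_ratCast q, isSubtorus_image_expMap_rationalHull (Z - Z), ?_⟩
  rw [image_expMap_eq_image_rationalHull hZ hZirr hE hz, hcoset, image_expMap_sub_mem]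

end TorsionTranslate

/-- If `Z ⊆ ℂ^n` is a nonempty irreducible Zariski closed subset defined over `ℚ̄`
such that `exp(Z) ⊆ (ℂ^*)^n` is also an irreducible Zariski closed subset defined
over `ℚ̄`, then `exp(Z)` is a torsion translate of a subtorus. -/
theorem exp_image_is_torsion_translate (n : ℕ) (hn : 1 ≤ n)
    (Z : Set (Fin n → ℂ))
    (hZne : Z.Nonempty)
    (hZclosed : ZClosedQbar n Z) (hZirr : IsIrrOf (ZClosed n) Z)
    (hEclosed : ZClosedTorusQbar n (expMap n '' Z))
    (hEirr : IsIrrOf (ZClosedTorus n) (expMap n '' Z)) :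
    IsTorsionTranslateOfSubtorus n (expMap n '' Z) := by
  obtain ⟨z, hz, hzalg⟩ := hZclosed.exists_isAlgebraic hZne
  obtain ⟨_, ⟨y, hy, rfl⟩, hyalg⟩ := hEclosed.exists_isAlgebraic (hZne.image _)
  exact exp_image_is_torsion_translate_general hZclosed.zClosed hZirr hEclosed.zClosedTorus hz hzalg
    hy hyalg
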